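/- arXiv:1110.1014 — 10 statements merged into one kernel-verified Lean document; each statement's English description precedes it below -/
import Mathlib

section
/- Let K be a d-dimensional maximal lattice-free set in ℝ^d and let r be the dimension of the recession cone rec(K). Then K is a polyhedron (an intersection of finitely many closed halfspaces) with at most 2^(d−r) facets. -/
open Pointwise

/-- The standard integer lattice `ℤ^d` viewed as a subset of `ℝ^d`. -/
def intLattice (d : ℕ) : Set (Fin d → ℝ) :=
  Set.range (fun z : Fin d → ℤ => fun i => (z i : ℝ))

/-- A set `K ⊆ ℝ^d` is lattice-free if it is closed, convex, and its interior
contains no point of `ℤ^d`. -/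
def IsLatticeFree (d : ℕ) (K : Set (Fin d → ℝ)) : Prop :=
  IsClosed K ∧ Convex ℝ K ∧ interior K ∩ intLattice d = ∅

/-- A lattice-free set is maximal if it is not properly contained in another
lattice-free set. -/
def IsMaxLatticeFree (d : ℕ) (K : Set (Fin d → ℝ)) : Prop :=
  IsLatticeFree d K ∧ ∀ K' : Set (Fin d → ℝ), IsLatticeFree d K' → K ⊆ K' → K' = K

/-- The recession cone of `K`: all vectors `u` with `K + u ⊆ K`. -/
def recCone (d : ℕ) (K : Set (Fin d → ℝ)) : Set (Fin d → ℝ) :=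
  {u | ∀ x ∈ K, x + u ∈ K}

/-- A polyhedron: an intersection of finitely many closed halfspaces. -/
def IsPolyhedron (d : ℕ) (K : Set (Fin d → ℝ)) : Prop :=
  ∃ (n : ℕ) (a : Fin n → (Fin d → ℝ)) (b : Fin n → ℝ),
    K = {x | ∀ i, ∑ j, a i j * x j ≤ b i}

/-- A polytope: the convex hull of finitely many points. -/
def IsPolytope (d : ℕ) (K : Set (Fin d → ℝ)) : Prop :=
  ∃ s : Finset (Fin d → ℝ), K = convexHull ℝ (s : Set (Fin d → ℝ))

/-- A facet of a `d`-dimensional convex set `K ⊆ ℝ^d`: a nonempty convex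
(extreme) face of dimension `d - 1`. -/
def IsFacet (d : ℕ) (K F : Set (Fin d → ℝ)) : Prop :=
  F.Nonempty ∧ IsExtreme ℝ K F ∧ Convex ℝ F ∧
    Module.finrank ℝ (affineSpan ℝ F).direction + 1 = d

section MaximalFree

variable {E : Type*} [NormedAddCommGroup E] [NormedSpace ℝ E]

/-- `K` is inclusion-maximal among the closed convex sets whose interior misses `Λ`. -/
structure IsMaximalFree (Λ K : Set E) : Prop where
  isClosed : IsClosed K
  convex : Convex ℝ K
  disjoint : Disjoint (interior K) Λ
  eq_of_subset : ∀ K' : Set E, IsClosed K' → Convex ℝ K' → Disjoint (interior K') Λ →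
    K ⊆ K' → K' = K

theorem IsMaximalFree.add_mem_of_disjoint {Λ K : Set E} (h : IsMaximalFree Λ K)
    (hne : (interior K).Nonempty) (M : Submodule ℝ E)
    (hM : Disjoint (interior K + (M : Set E)) Λ) {x u : E} (hx : x ∈ K) (hu : u ∈ M) :
    x + u ∈ K := by
  have hopen : IsOpen (interior K + (M : Set E)) := isOpen_interior.add_right
  have hconv : Convex ℝ (interior K + (M : Set E)) := h.convex.interior.add M.convex
  have hsub : interior K ⊆ interior K + (M : Set E) :=
    fun y hy => ⟨y, hy, 0, M.zero_mem, add_zero y⟩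
  have hKcl : K ⊆ closure (interior K) := by
    rw [h.convex.closure_interior_eq_closure_of_nonempty_interior hne]
    exact subset_closure
  have hint : interior (closure (interior K + (M : Set E))) = interior K + (M : Set E) := by
    rw [hconv.interior_closure_eq_interior_of_nonempty_interior, hopen.interior_eq]
    rw [hopen.interior_eq]
    exact hne.mono hsub
  have heq : closure (interior K + (M : Set E)) = K :=
    h.eq_of_subset _ isClosed_closure hconv.closure (by rwa [hint])
      (hKcl.trans (closure_mono hsub))
  rw [← heq]
  exact map_mem_closure (f := fun y => y + u) (by fun_prop) (hKcl hx)
    fun y hy => ⟨y, hy, u, hu, rfl⟩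

theorem Submodule.exists_line_subset_closure_of_not_discreteTopology [FiniteDimensional ℝ E]
    (Λ : Submodule ℤ E) (h : ¬ DiscreteTopology Λ) :
    ∃ v : E, v ≠ 0 ∧ ∀ t : ℝ, t • v ∈ closure (Λ : Set E) := by
  have hsmall : ∀ ε > 0, ∃ w ∈ Λ, w ≠ 0 ∧ ‖w‖ < ε := by
    intro ε hε
    by_contra! hcon
    refine h (discreteTopology_of_isOpen_singleton_zero ?_)
    rw [Metric.isOpen_singleton_iff]
    refine ⟨ε, hε, fun y hy => ?_⟩
    by_contra hy0
    have := hcon y y.2 (by simpa using hy0)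
    rw [dist_zero_right] at hy
    exact absurd hy (not_lt.mpr this)
  choose w hwΛ hw0 hwlt using fun k : ℕ => hsmall (1 / ((k : ℝ) + 1)) (by positivity)
  have hsphere : ∀ k, ‖w k‖⁻¹ • w k ∈ Metric.sphere (0 : E) 1 := fun k => by
    rw [mem_sphere_zero_iff_norm, norm_smul, norm_inv, norm_norm,
      inv_mul_cancel₀ (norm_ne_zero_iff.mpr (hw0 k))]
  obtain ⟨v, hv, φ, hφ, hlim⟩ := (isCompact_sphere (0 : E) 1).tendsto_subseq hsphere
  refine ⟨v, Metric.ne_of_mem_sphere hv one_ne_zero, fun t => ?_⟩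
  have hnorm : Filter.Tendsto (fun k => ‖w (φ k)‖) Filter.atTop (nhds 0) := by
    have h0 : Filter.Tendsto (fun k => ‖w k‖) Filter.atTop (nhds 0) :=
      squeeze_zero (fun _ => norm_nonneg _) (fun k => (hwlt k).le)
        tendsto_one_div_add_atTop_nhds_zero_nat
    exact h0.comp hφ.tendsto_atTop
  have hscal : Filter.Tendsto (fun k => (⌊t / ‖w (φ k)‖⌋ : ℝ) * ‖w (φ k)‖) Filter.atTop
      (nhds t) := by
    rw [tendsto_iff_dist_tendsto_zero]
    refine squeeze_zero (fun _ => dist_nonneg) (fun k => ?_) hnorm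
    have hpos : 0 < ‖w (φ k)‖ := norm_pos_iff.mpr (hw0 _)
    have h1 := Int.floor_le (t / ‖w (φ k)‖)
    have h2 := Int.lt_floor_add_one (t / ‖w (φ k)‖)
    rw [le_div_iff₀ hpos] at h1
    rw [div_lt_iff₀ hpos] at h2
    rw [Real.dist_eq, abs_le]
    constructor <;> nlinarith
  refine mem_closure_of_tendsto (hscal.smul hlim) (Filter.Eventually.of_forall fun k => ?_)
  have hne : ‖w (φ k)‖ ≠ 0 := norm_ne_zero_iff.mpr (hw0 _)
  have : ((⌊t / ‖w (φ k)‖⌋ : ℝ) * ‖w (φ k)‖) • (‖w (φ k)‖⁻¹ • w (φ k))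
      = ⌊t / ‖w (φ k)‖⌋ • w (φ k) := by
    rw [smul_smul, mul_assoc, mul_inv_cancel₀ hne, mul_one, Int.cast_smul_eq_zsmul]
  simp only [Function.comp_apply, this]
  exact Λ.smul_mem _ (hwΛ _)

theorem IsMaximalFree.discreteTopology [FiniteDimensional ℝ E] {Λ : Submodule ℤ E} {K : Set E}
    (h : IsMaximalFree (Λ : Set E) K) (hne : (interior K).Nonempty)
    (hb : Bornology.IsBounded K) : DiscreteTopology Λ := by
  by_contra hdisc
  obtain ⟨v, hv0, hv⟩ := Λ.exists_line_subset_closure_of_not_discreteTopology hdisc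
  have hdisj : Disjoint (interior K + ((ℝ ∙ v : Submodule ℝ E) : Set E)) (Λ : Set E) := by
    rw [Set.disjoint_left]
    rintro _ ⟨x, hx, u, hu, rfl⟩ hz
    obtain ⟨t, rfl⟩ := Submodule.mem_span_singleton.mp hu
    have hxcl : x ∈ closure (Λ : Set E) := by
      have : x = (x + t • v) - t • v := by abel
      rw [this]
      exact (Λ.toAddSubgroup.topologicalClosure).sub_mem (subset_closure hz) (hv t)
    obtain ⟨y, hyK, hyΛ⟩ := mem_closure_iff.mp hxcl _ isOpen_interior hx
    exact Set.disjoint_left.mp h.disjoint hyK hyΛ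
  obtain ⟨x, hx⟩ := hne
  obtain ⟨C, hC⟩ := hb.exists_norm_le
  have hmem : ∀ t : ℝ, x + t • v ∈ K := fun t =>
    h.add_mem_of_disjoint ⟨x, hx⟩ _ hdisj (interior_subset hx)
      (Submodule.smul_mem _ _ (Submodule.mem_span_singleton_self v))
  have hvpos : 0 < ‖v‖ := norm_pos_iff.mpr hv0
  have h1 := hC _ (hmem ((C + ‖x‖ + 1) / ‖v‖))
  have h2 := norm_sub_le (x + ((C + ‖x‖ + 1) / ‖v‖) • v) x
  have hCnn : 0 ≤ C := (norm_nonneg _).trans h1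
  rw [add_sub_cancel_left, norm_smul, Real.norm_eq_abs, abs_of_nonneg (by positivity),
    div_mul_cancel₀ _ hvpos.ne'] at h2
  linarith

end MaximalFree

section Polyhedron

variable {E : Type*} [NormedAddCommGroup E] [NormedSpace ℝ E]

/-- The intersection of the halfspaces `f x ≤ c` over the pairs `(f, c)` in `s`. -/
def halfspaceInter (s : Finset (StrongDual ℝ E × ℝ)) : Set E :=
  {x | ∀ p ∈ s, p.1 x ≤ p.2}

theorem isClosed_halfspaceInter (s : Finset (StrongDual ℝ E × ℝ)) :
    IsClosed (halfspaceInter s) := by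
  simp only [halfspaceInter, Set.ofPred_forall]
  exact isClosed_biInter fun p _ => isClosed_le p.1.continuous continuous_const

theorem convex_halfspaceInter (s : Finset (StrongDual ℝ E × ℝ)) :
    Convex ℝ (halfspaceInter s) := by
  simp only [halfspaceInter, Set.ofPred_forall]
  exact convex_iInter₂ fun p _ => convex_halfSpace_le p.1.toLinearMap.isLinear _

theorem interior_halfspaceInter {s : Finset (StrongDual ℝ E × ℝ)} (hs : ∀ p ∈ s, p.1 ≠ 0) :
    interior (halfspaceInter s) = {x | ∀ p ∈ s, p.1 x < p.2} := by
  apply Set.Subset.antisymm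
  · intro x hx p hp
    refine lt_of_le_of_ne (interior_subset hx p hp) fun heq => hs p hp ?_
    refine IsLocalMax.hasFDerivAt_eq_zero (a := x) ?_ p.1.hasFDerivAt
    filter_upwards [mem_interior_iff_mem_nhds.mp hx] with y hy
    exact (hy p hp).trans_eq heq.symm
  · refine interior_maximal (fun x hx p hp => (hx p hp).le) ?_
    simp only [Set.ofPred_forall]
    exact isOpen_biInter_finset fun p _ => isOpen_lt p.1.continuous continuous_const

end Polyhedron

section BoundedPolyhedron

variable {E : Type*} [NormedAddCommGroup E] [NormedSpace ℝ E]

theorem IsMaximalFree.exists_halfspaceInter {n : ℕ} {Λ K : Set (Fin n → ℝ)}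
    (h : IsMaximalFree Λ K) (hne : (interior K).Nonempty) (hb : Bornology.IsBounded K)
    (hfin : ∀ B : Set (Fin n → ℝ), Bornology.IsBounded B → (B ∩ Λ).Finite) :
    ∃ s : Finset (StrongDual ℝ (Fin n → ℝ) × ℝ), (∀ p ∈ s, p.1 ≠ 0) ∧ K = halfspaceInter s := by
  classical
  obtain ⟨R, hR⟩ := hb.exists_norm_le
  have hsep : ∀ z ∈ Λ, ∃ f : StrongDual ℝ (Fin n → ℝ), ∀ a ∈ interior K, f a < f z :=
    fun z hz => geometric_hahn_banach_open_point h.convex.interior isOpen_interior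
      (Set.disjoint_right.mp h.disjoint hz)
  choose! f hf using hsep
  have hfinB := hfin (Metric.closedBall 0 R) Metric.isBounded_closedBall
  let π : Fin n → StrongDual ℝ (Fin n → ℝ) := fun i => ContinuousLinearMap.proj i
  have hπ0 : ∀ i, π i ≠ 0 := fun i hi => by
    have := DFunLike.congr_fun hi (Pi.single i 1)
    simp [π] at this
  let s : Finset (StrongDual ℝ (Fin n → ℝ) × ℝ) :=
    (Finset.univ.image fun i => (π i, R)) ∪ (Finset.univ.image fun i => (-π i, R)) ∪
      (hfinB.toFinset.image fun z => (f z, f z z))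
  have hs0 : ∀ p ∈ s, p.1 ≠ 0 := by
    intro p hp
    simp only [s, Finset.mem_union, Finset.mem_image, Finset.mem_univ, true_and,
      Set.Finite.mem_toFinset] at hp
    rcases hp with (⟨i, rfl⟩ | ⟨i, rfl⟩) | ⟨z, hz, rfl⟩
    · exact hπ0 i
    · exact neg_ne_zero.mpr (hπ0 i)
    · intro h0
      obtain ⟨x, hx⟩ := hne
      have := hf z hz.2 x hx
      simp_all
  refine ⟨s, hs0, ((h.eq_of_subset _ (isClosed_halfspaceInter s) (convex_halfspaceInter s) ?_
    ?_)).symm⟩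
  · rw [interior_halfspaceInter hs0, Set.disjoint_left]
    intro z hz hzΛ
    have hzB : z ∈ Metric.closedBall (0 : Fin n → ℝ) R := by
      rw [mem_closedBall_zero_iff]
      obtain ⟨x, hx⟩ := hne
      have hR0 : 0 ≤ R := (norm_nonneg _).trans (hR x (interior_subset hx))
      rw [pi_norm_le_iff_of_nonneg hR0]
      intro i
      have h1 := hz (π i, R) (by simp [s])
      have h2 := hz (-π i, R) (by simp [s])
      simp only [π, ContinuousLinearMap.proj_apply, neg_apply] at h1 h2
      rw [Real.norm_eq_abs, abs_le]
      constructor <;> linarith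
    have h3 := hz (f z, f z z) (by
      simp only [s, Finset.mem_union, Finset.mem_image, Set.Finite.mem_toFinset]
      exact Or.inr ⟨z, ⟨hzB, hzΛ⟩, rfl⟩)
    exact lt_irrefl _ h3
  · intro x hx p hp
    simp only [s, Finset.mem_union, Finset.mem_image, Finset.mem_univ, true_and,
      Set.Finite.mem_toFinset] at hp
    rcases hp with (⟨i, rfl⟩ | ⟨i, rfl⟩) | ⟨z, hz, rfl⟩
    · exact (le_abs_self _).trans ((norm_le_pi_norm x i).trans (hR x hx))
    · exact (neg_le_abs _).trans ((norm_le_pi_norm x i).trans (hR x hx))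
    · have hcl : x ∈ closure (interior K) := by
        rw [h.convex.closure_interior_eq_closure_of_nonempty_interior hne]
        exact subset_closure hx
      exact closure_minimal (t := {y | f z y ≤ f z z}) (fun y hy => (hf z hz.2 y hy).le)
        (isClosed_le (f z).continuous continuous_const) hcl

/-- Relaxing one constraint keeps a bounded full-dimensional polyhedron bounded. -/
theorem isBounded_setOf_relaxed [DecidableEq (StrongDual ℝ E × ℝ)]
    {s : Finset (StrongDual ℝ E × ℝ)} {p : StrongDual ℝ E × ℝ} {c : ℝ} {x₀ : E}
    (hx₀ : ∀ q ∈ s, q.1 x₀ < q.2) (hp : p ∈ s)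
    (hb : Bornology.IsBounded (halfspaceInter s)) (hc : p.2 ≤ c) :
    Bornology.IsBounded {x | (∀ q ∈ s.erase p, q.1 x ≤ q.2) ∧ p.1 x ≤ c} := by
  have hp0 := hx₀ p hp
  obtain ⟨C, hC⟩ := hb.exists_norm_le
  set t : ℝ := (p.2 - p.1 x₀) / (c - p.1 x₀) with ht
  have hden : 0 < c - p.1 x₀ := by linarith
  have ht0 : 0 < t := div_pos (by linarith) hden
  have ht1 : t ≤ 1 := (div_le_one hden).mpr (by linarith)
  have htmul : t * (c - p.1 x₀) = p.2 - p.1 x₀ := div_mul_cancel₀ _ hden.ne'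
  refine isBounded_iff_forall_norm_le.mpr ⟨‖x₀‖ + t⁻¹ * (C + ‖x₀‖), ?_⟩
  rintro x ⟨hx, hxp⟩
  have hmem : x₀ + t • (x - x₀) ∈ halfspaceInter s := by
    intro q hq
    simp only [map_add, map_smul, map_sub, smul_eq_mul]
    by_cases hqp : q = p
    · subst hqp
      nlinarith
    · have h1 := hx q (Finset.mem_erase.mpr ⟨hqp, hq⟩)
      have h2 := hx₀ q hq
      nlinarith
  have h1 := hC _ hmem
  have h2 : t • (x - x₀) = (x₀ + t • (x - x₀)) - x₀ := by abel
  have h3 : ‖t • (x - x₀)‖ ≤ C + ‖x₀‖ := by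
    rw [h2]
    exact (norm_sub_le _ _).trans (by linarith)
  rw [norm_smul, Real.norm_eq_abs, abs_of_pos ht0] at h3
  have h4 : ‖x - x₀‖ ≤ t⁻¹ * (C + ‖x₀‖) := by
    rw [inv_mul_eq_div, le_div_iff₀ ht0]
    linarith
  have h5 : x = x₀ + (x - x₀) := by abel
  calc ‖x‖ = ‖x₀ + (x - x₀)‖ := by rw [← h5]
    _ ≤ ‖x₀‖ + ‖x - x₀‖ := norm_add_le _ _
    _ ≤ _ := by linarith

/-- Each irredundant constraint is blocked by a point of `Λ` in the relative interior of the
corresponding facet. -/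
theorem IsMaximalFree.exists_mem_facet [DecidableEq (StrongDual ℝ E × ℝ)] {Λ : Set E}
    {s : Finset (StrongDual ℝ E × ℝ)} (h : IsMaximalFree Λ (halfspaceInter s))
    (hs : ∀ p ∈ s, p.1 ≠ 0) (hne : (interior (halfspaceInter s)).Nonempty)
    (hb : Bornology.IsBounded (halfspaceInter s))
    (hfin : ∀ B : Set E, Bornology.IsBounded B → (B ∩ Λ).Finite)
    {p : StrongDual ℝ E × ℝ} (hp : p ∈ s)
    (hirr : halfspaceInter (s.erase p) ≠ halfspaceInter s) :
    ∃ z ∈ Λ, p.1 z = p.2 ∧ ∀ q ∈ s.erase p, q.1 z < q.2 := by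
  obtain ⟨x₀, hx₀⟩ := hne
  rw [interior_halfspaceInter hs] at hx₀
  obtain ⟨y, hy, hyp⟩ : ∃ y ∈ halfspaceInter (s.erase p), p.2 < p.1 y := by
    by_contra! hcon
    refine hirr (Set.Subset.antisymm (fun y hy q hq => ?_)
      fun y hy q hq => hy q (Finset.mem_of_mem_erase hq))
    by_cases hqp : q = p
    · exact hqp ▸ hcon y hy
    · exact hy q (Finset.mem_erase.mpr ⟨hqp, hq⟩)
  have hp0 := hx₀ p hp
  have hblock : ∀ c > p.2, ∃ z ∈ Λ, (∀ q ∈ s.erase p, q.1 z < q.2) ∧ p.1 z < c := by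
    intro c hc
    have hs' : ∀ q ∈ insert (p.1, c) (s.erase p), q.1 ≠ 0 := by
      intro q hq
      rcases Finset.mem_insert.mp hq with rfl | hq
      · exact hs p hp
      · exact hs q (Finset.mem_of_mem_erase hq)
    by_contra! hcon
    have hdisj : Disjoint (interior (halfspaceInter (insert (p.1, c) (s.erase p)))) Λ := by
      rw [interior_halfspaceInter hs', Set.disjoint_left]
      intro z hz hzΛ
      exact absurd (hz (p.1, c) (Finset.mem_insert_self _ _)) (not_lt.mpr
        (hcon z hzΛ fun q hq => hz q (Finset.mem_insert_of_mem hq)))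
    have heq := h.eq_of_subset _ (isClosed_halfspaceInter _) (convex_halfspaceInter _) hdisj
      (by
        intro x hx q hq
        rcases Finset.mem_insert.mp hq with rfl | hq
        · exact (hx p hp).trans hc.le
        · exact hx q (Finset.mem_of_mem_erase hq))
    set c' := min c (p.1 y) with hc'
    have hc'1 : p.2 < c' := lt_min hc hyp
    have hc'2 : c' ≤ p.1 y := min_le_right _ _
    have hden : 0 < p.1 y - p.1 x₀ := by linarith
    set t : ℝ := (c' - p.1 x₀) / (p.1 y - p.1 x₀) with ht
    have ht0 : 0 ≤ t := div_nonneg (by linarith) hden.le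
    have ht1 : t ≤ 1 := (div_le_one hden).mpr (by linarith)
    have htmul : t * (p.1 y - p.1 x₀) = c' - p.1 x₀ := div_mul_cancel₀ _ hden.ne'
    have hval : p.1 (x₀ + t • (y - x₀)) = c' := by
      simp only [map_add, map_smul, map_sub, smul_eq_mul]
      linarith
    have hmem : x₀ + t • (y - x₀) ∈ halfspaceInter (insert (p.1, c) (s.erase p)) := by
      intro q hq
      rcases Finset.mem_insert.mp hq with rfl | hq
      · exact hval.le.trans (min_le_left _ _)
      · have h1 := hy q hq
        have h2 := hx₀ q (Finset.mem_of_mem_erase hq)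
        simp only [map_add, map_smul, map_sub, smul_eq_mul]
        nlinarith
    rw [heq] at hmem
    have := hmem p hp
    linarith
  have hge : ∀ z ∈ Λ, (∀ q ∈ s.erase p, q.1 z < q.2) → p.2 ≤ p.1 z := by
    intro z hz hzq
    by_contra! hlt
    refine Set.disjoint_left.mp h.disjoint ?_ hz
    rw [interior_halfspaceInter hs]
    intro q hq
    by_cases hqp : q = p
    · exact hqp ▸ hlt
    · exact hzq q (Finset.mem_erase.mpr ⟨hqp, hq⟩)
  let T : Set E := {z | z ∈ Λ ∧ (∀ q ∈ s.erase p, q.1 z < q.2) ∧ p.1 z < p.2 + 1}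
  have hTfin : T.Finite := by
    refine (hfin _ (isBounded_setOf_relaxed hx₀ hp hb (c := p.2 + 1) (by linarith))).subset ?_
    rintro z ⟨hz, hzq, hzp⟩
    exact ⟨⟨fun q hq => (hzq q hq).le, hzp.le⟩, hz⟩
  have hTne : T.Nonempty := by
    obtain ⟨z, hz⟩ := hblock (p.2 + 1) (by linarith)
    exact ⟨z, hz⟩
  obtain ⟨z, ⟨hz, hzq, hzp⟩, hmin⟩ := hTfin.exists_minimalFor p.1 T hTne
  refine ⟨z, hz, ?_, hzq⟩
  by_contra hne'
  obtain ⟨z', hz', hzq', hzp'⟩ := hblock (p.1 z) (lt_of_le_of_ne (hge z hz hzq) (Ne.symm hne'))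
  exact absurd (hmin ⟨hz', hzq', hzp'.trans hzp⟩ hzp'.le) (not_le.mpr hzp')

/-- Points of a rank `n` lattice represent at most `2 ^ n` classes modulo doubling. -/
theorem Finset.card_le_two_pow_of_midpoint_notMem {ι : Type*} {n : ℕ} {Λ : Submodule ℤ E}
    (b : Module.Basis (Fin n) ℤ Λ) (s : Finset ι) (z : ι → E) (hz : ∀ i ∈ s, z i ∈ Λ)
    (hmid : ∀ i ∈ s, ∀ j ∈ s, i ≠ j → (2⁻¹ : ℝ) • (z i + z j) ∉ Λ) : s.card ≤ 2 ^ n := by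
  classical
  let φ : s → (Fin n → ZMod 2) := fun i k => ((b.repr ⟨z i, hz i i.2⟩ k : ℤ) : ZMod 2)
  have hinj : Function.Injective φ := by
    intro i j hij
    by_contra hne
    refine hmid i i.2 j j.2 (fun h => hne (Subtype.ext h)) ?_
    have hdvd : ∀ k, ∃ m : ℤ, b.repr ⟨z i, hz i i.2⟩ k + b.repr ⟨z j, hz j j.2⟩ k = 2 * m := by
      intro k
      have h1 := (ZMod.intCast_eq_intCast_iff_dvd_sub _ _ 2).mp (congrFun hij k)
      obtain ⟨m, hm⟩ := h1
      exact ⟨m + b.repr ⟨z i, hz i i.2⟩ k, by push_cast at hm; linarith⟩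
    choose m hm using hdvd
    let w : Λ := ∑ k, m k • b k
    have hw : (⟨z i, hz i i.2⟩ + ⟨z j, hz j j.2⟩ : Λ) = (2 : ℤ) • w := by
      apply b.repr.injective
      ext k
      rw [map_add, Finsupp.add_apply, hm]
      simp [w, Finsupp.single_apply]
    have hw' : z i + z j = (2 : ℝ) • (w : E) := by
      have := congrArg (Subtype.val) hw
      rw [two_smul]
      simpa [two_smul] using this
    rw [hw', smul_smul]
    simp
  have hcard := Fintype.card_le_of_injective φ hinj
  simpa [ZMod.card] using hcard

theorem IsMaximalFree.exists_halfspaceInter_card_le {n : ℕ} {Λ : Submodule ℤ (Fin n → ℝ)}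
    {K : Set (Fin n → ℝ)} (h : IsMaximalFree (Λ : Set (Fin n → ℝ)) K)
    (hne : (interior K).Nonempty) (hb : Bornology.IsBounded K)
    (hspan : Submodule.span ℝ (Λ : Set (Fin n → ℝ)) = ⊤) :
    ∃ s : Finset (StrongDual ℝ (Fin n → ℝ) × ℝ),
      (∀ p ∈ s, p.1 ≠ 0) ∧ K = halfspaceInter s ∧ s.card ≤ 2 ^ n := by
  classical
  have hdisc : DiscreteTopology Λ := h.discreteTopology hne hb
  have hlat : IsZLattice ℝ Λ := ⟨hspan⟩
  have hfin : ∀ B : Set (Fin n → ℝ), Bornology.IsBounded B →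
      (B ∩ (Λ : Set (Fin n → ℝ))).Finite := fun B hB =>
    Metric.finite_isBounded_inter_isClosed DiscreteTopology.isDiscrete hB
      (AddSubgroup.isClosed_of_discrete (H := Λ.toAddSubgroup))
  obtain ⟨s, ⟨hs0, hsK⟩, hmin⟩ := exists_minimal_of_wellFoundedLT
    (fun s : Finset (StrongDual ℝ (Fin n → ℝ) × ℝ) =>
      (∀ p ∈ s, p.1 ≠ 0) ∧ K = halfspaceInter s) (h.exists_halfspaceInter hne hb hfin)
  refine ⟨s, hs0, hsK, ?_⟩
  subst hsK
  have hirr : ∀ p ∈ s, halfspaceInter (s.erase p) ≠ halfspaceInter s := fun p hp heq =>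
    Finset.notMem_erase p s (hmin ⟨fun q hq => hs0 q (Finset.mem_of_mem_erase hq), heq.symm⟩
      (Finset.erase_subset p s) hp)
  choose! z hzΛ hzp hzq using fun p (hp : p ∈ s) =>
    h.exists_mem_facet hs0 hne hb hfin hp (hirr p hp)
  let b : Module.Basis (Fin n) ℤ Λ := Module.finBasisOfFinrankEq ℤ Λ
    (by rw [ZLattice.rank ℝ Λ, Module.finrank_fin_fun])
  refine Finset.card_le_two_pow_of_midpoint_notMem b s z hzΛ fun i hi j hj hij hmem => ?_
  refine Set.disjoint_left.mp h.disjoint ?_ hmem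
  rw [interior_halfspaceInter hs0]
  intro q hq
  have hle : ∀ p ∈ s, q.1 (z p) ≤ q.2 := fun p hp => by
    by_cases hqp : q = p
    · subst hqp
      exact (hzp _ hp).le
    · exact (hzq p hp q (Finset.mem_erase.mpr ⟨hqp, hq⟩)).le
  have hi' := hle i hi
  have hj' := hle j hj
  simp only [map_smul, map_add, smul_eq_mul]
  by_cases hqi : q = i
  · have := hzq j hj q (Finset.mem_erase.mpr ⟨fun hqj => hij (hqi.symm.trans hqj), hq⟩)
    linarith
  · have := hzq i hi q (Finset.mem_erase.mpr ⟨hqi, hq⟩)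
    linarith

end BoundedPolyhedron

section Projection

variable {E F : Type*} [NormedAddCommGroup E] [NormedSpace ℝ E]
  [NormedAddCommGroup F] [NormedSpace ℝ F]

theorem IsMaximalFree.image {Λ K : Set E} (h : IsMaximalFree Λ K) (π : E →L[ℝ] F)
    (hsurj : Function.Surjective π) (hopen : IsOpenMap π) (hsat : π ⁻¹' (π '' K) = K) :
    IsMaximalFree (π '' Λ) (π '' K) where
  isClosed := by
    rw [← (hopen.isQuotientMap π.continuous hsurj).isClosed_preimage, hsat]
    exact h.isClosed
  convex := h.convex.is_linear_image π.toLinearMap.isLinear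
  disjoint := by
    rw [Set.disjoint_right]
    rintro _ ⟨z, hz, rfl⟩ hmem
    refine Set.disjoint_right.mp h.disjoint hz ?_
    rw [← hsat, ← hopen.preimage_interior_eq_interior_preimage π.continuous]
    exact hmem
  eq_of_subset := by
    intro K' hcl hconv hdisj hsub
    have heq := h.eq_of_subset (π ⁻¹' K') (hcl.preimage π.continuous)
      (hconv.is_linear_preimage π.toLinearMap.isLinear)
      (by
        rw [← hopen.preimage_interior_eq_interior_preimage π.continuous, Set.disjoint_right]
        exact fun z hz hmem => Set.disjoint_right.mp hdisj (Set.mem_image_of_mem π hz) hmem)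
      (Set.image_subset_iff.mp hsub)
    rw [← heq, Set.image_preimage_eq _ hsurj]

/-- A nonempty closed convex set without nonzero recession direction is bounded. -/
theorem Convex.isBounded_of_forall_recession_eq_zero [FiniteDimensional ℝ E] {K : Set E}
    (hconv : Convex ℝ K) (hcl : IsClosed K)
    (hrec : ∀ u : E, (∀ x ∈ K, x + u ∈ K) → u = 0) : Bornology.IsBounded K := by
  by_contra hb
  obtain ⟨v, hv0, hv⟩ := not_bounded_iff_exists_ne_zero_mem_asymptoticCone.mp hb
  refine hv0 (hrec v fun x hx => ?_)
  have := hconv.smul_vadd_mem_of_isClosed_of_mem_asymptoticCone (c := 1) hcl zero_le_one hv hx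
  rwa [one_smul, vadd_eq_add, add_comm] at this

end Projection

section IntegerLattice

theorem exists_intLattice_near_smul {d : ℕ} (u : Fin d → ℝ) {ε : ℝ} (hε : 0 < ε) (N : ℕ) :
    ∃ n : ℕ, N ≤ n ∧ ∃ w ∈ intLattice d, ‖(n : ℝ) • u - w‖ < ε := by
  have hbox : ∀ k : ℕ, (fun i => Int.fract ((k : ℝ) * u i)) ∈
      Set.Icc (0 : Fin d → ℝ) 1 := fun k =>
    ⟨fun i => Int.fract_nonneg _, fun i => (Int.fract_lt_one _).le⟩
  obtain ⟨a, -, φ, hφ, hlim⟩ := isCompact_Icc.tendsto_subseq hbox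
  obtain ⟨k, hk⟩ := Metric.cauchySeq_iff.mp hlim.cauchySeq ε hε
  have hgap : φ k + N ≤ φ (k + N) := by
    simpa [add_comm] using hφ.add_le_nat N k
  refine ⟨φ (k + N) - φ k, by omega, fun i =>
    ((⌊(φ (k + N) : ℝ) * u i⌋ - ⌊(φ k : ℝ) * u i⌋ : ℤ) : ℝ),
    ⟨fun i => ⌊(φ (k + N) : ℝ) * u i⌋ - ⌊(φ k : ℝ) * u i⌋, rfl⟩, ?_⟩
  have hd := hk (k + N) (by omega) k le_rfl
  rw [dist_eq_norm] at hd
  convert! hd using 2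
  ext i
  simp only [Pi.sub_apply, Pi.smul_apply, smul_eq_mul, Function.comp_apply, Int.fract]
  rw [Nat.cast_sub (by omega)]
  push_cast
  ring

theorem add_smul_mem_of_mem_recCone {d : ℕ} {K : Set (Fin d → ℝ)} (hconv : Convex ℝ K)
    {u x : Fin d → ℝ} (hu : u ∈ recCone d K) (hx : x ∈ K) {t : ℝ} (ht : 0 ≤ t) :
    x + t • u ∈ K := by
  have hnat : ∀ n : ℕ, x + (n : ℝ) • u ∈ K := by
    intro n
    induction n with
    | zero => simpa using hx
    | succ n ih =>
      have := hu _ ih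
      rw [add_assoc] at this
      rwa [Nat.cast_succ, add_smul, one_smul]
  rcases ht.eq_or_lt with rfl | ht
  · simpa using hx
  have hceil : 0 < (⌈t⌉₊ : ℝ) := by exact_mod_cast Nat.ceil_pos.mpr ht
  have := hconv.add_smul_mem hx (hnat ⌈t⌉₊)
    (t := t / ⌈t⌉₊) ⟨by positivity, (div_le_one hceil).mpr (Nat.le_ceil t)⟩
  rwa [smul_smul, div_mul_cancel₀ _ hceil.ne'] at this

theorem IsMaximalFree.add_smul_mem_of_mem_recCone {d : ℕ} {K : Set (Fin d → ℝ)}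
    (h : IsMaximalFree (intLattice d) K) (hne : (interior K).Nonempty) {u x : Fin d → ℝ}
    (hu : u ∈ recCone d K) (hx : x ∈ K) (t : ℝ) : x + t • u ∈ K := by
  refine h.add_mem_of_disjoint hne (ℝ ∙ u) ?_ hx
    (Submodule.smul_mem _ _ (Submodule.mem_span_singleton_self u))
  rw [Set.disjoint_left]
  rintro _ ⟨y, hy, v, hv, rfl⟩ ⟨z, hz⟩
  obtain ⟨c, rfl⟩ := Submodule.mem_span_singleton.mp hv
  obtain ⟨ε, hε, hball⟩ := Metric.isOpen_iff.mp isOpen_interior y hy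
  obtain ⟨N, hN⟩ := exists_nat_ge (-c)
  obtain ⟨n, hn, w, ⟨w', hw'⟩, hw⟩ := exists_intLattice_near_smul u hε N
  have hnc : 0 ≤ c + n := by
    have : (N : ℝ) ≤ n := by exact_mod_cast hn
    linarith
  have hsub : interior K + {(c + n) • u} ⊆ interior K := by
    refine interior_maximal ?_ isOpen_interior.add_right
    rintro _ ⟨a, ha, _, rfl, rfl⟩
    exact _root_.add_smul_mem_of_mem_recCone h.convex hu (interior_subset ha) hnc
  have hnear : y + (w - (n : ℝ) • u) ∈ interior K := by
    apply hball
    rw [mem_ball_iff_norm, add_sub_cancel_left, norm_sub_rev]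
    exact hw
  refine Set.disjoint_left.mp h.disjoint (hsub ⟨_, hnear, _, rfl, rfl⟩)
    ⟨fun i => z i + w' i, ?_⟩
  ext i
  have h1 := congrFun hz i
  have h2 := congrFun hw' i
  simp only [Pi.add_apply, Pi.smul_apply, Pi.sub_apply, smul_eq_mul] at h1 h2 ⊢
  push_cast
  rw [h1, h2]
  ring

theorem IsMaximalFree.add_mem_of_mem_span_recCone {d : ℕ} {K : Set (Fin d → ℝ)}
    (h : IsMaximalFree (intLattice d) K) (hne : (interior K).Nonempty) {u x : Fin d → ℝ}
    (hu : u ∈ Submodule.span ℝ (recCone d K)) (hx : x ∈ K) : x + u ∈ K := by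
  have hmem : u ∈ recCone d K := by
    induction hu using Submodule.span_induction with
    | mem v hv => exact hv
    | zero => exact fun y hy => by simpa using hy
    | add v w _ _ hv hw => exact fun y hy => by simpa [add_assoc] using hw _ (hv y hy)
    | smul c v _ hv => exact fun y hy => h.add_smul_mem_of_mem_recCone hne hv hy c
  exact hmem x hx

/-- The coordinatewise cast `ℤ^d → ℝ^d`, whose range is `intLattice d`. -/
def intCastVec (d : ℕ) : (Fin d → ℤ) →ₗ[ℤ] (Fin d → ℝ) :=
  (Int.castAddHom ℝ).toIntLinearMap.compLeft (Fin d)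

theorem span_intLattice (d : ℕ) : Submodule.span ℝ (intLattice d) = ⊤ := by
  rw [eq_top_iff, ← (Pi.basisFun ℝ (Fin d)).span_eq]
  refine Submodule.span_mono ?_
  rintro _ ⟨i, rfl⟩
  refine ⟨Pi.single i 1, ?_⟩
  ext j
  by_cases hij : j = i
  · subst hij; simp
  · simp [hij]

theorem IsMaximalFree.exists_halfspaceInter_of_intLattice {d r : ℕ} {K : Set (Fin d → ℝ)}
    (h : IsMaximalFree (intLattice d) K) (hne : (interior K).Nonempty)
    (hr : Module.finrank ℝ (Submodule.span ℝ (recCone d K)) = r) :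
    ∃ s : Finset (StrongDual ℝ (Fin d → ℝ) × ℝ),
      (∀ p ∈ s, p.1 ≠ 0) ∧ K = halfspaceInter s ∧ s.card ≤ 2 ^ (d - r) := by
  classical
  set L := Submodule.span ℝ (recCone d K) with hL
  have hrank : Module.finrank ℝ ((Fin d → ℝ) ⧸ L) = Module.finrank ℝ (Fin (d - r) → ℝ) := by
    rw [Submodule.finrank_quotient, hr, Module.finrank_fin_fun, Module.finrank_fin_fun]
  let e : ((Fin d → ℝ) ⧸ L) ≃ₗ[ℝ] (Fin (d - r) → ℝ) := LinearEquiv.ofFinrankEq _ _ hrank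
  let π : (Fin d → ℝ) →L[ℝ] (Fin (d - r) → ℝ) :=
    LinearMap.toContinuousLinearMap (e.toLinearMap ∘ₗ L.mkQ)
  have hsurj : Function.Surjective π := e.surjective.comp L.mkQ_surjective
  have hopen : IsOpenMap π := LinearMap.isOpenMap_of_finiteDimensional π.toLinearMap hsurj
  have hker : ∀ v, π v = 0 ↔ v ∈ L := fun v => by simp [π]
  have hsat : π ⁻¹' (π '' K) = K := by
    refine Set.Subset.antisymm ?_ (Set.subset_preimage_image _ _)
    rintro y ⟨x, hx, hxy⟩
    have hmem : y - x ∈ L := (hker _).mp (by rw [map_sub, hxy, sub_self])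
    simpa using h.add_mem_of_mem_span_recCone hne hmem hx
  have hπ := h.image π hsurj hopen hsat
  have hneπ : (interior (π '' K)).Nonempty :=
    (hne.image π).mono (hopen.image_interior_subset K)
  have hbπ : Bornology.IsBounded (π '' K) := by
    refine hπ.convex.isBounded_of_forall_recession_eq_zero hπ.isClosed fun u hu => ?_
    obtain ⟨v, rfl⟩ := hsurj u
    refine (hker v).mpr (Submodule.subset_span fun x hx => ?_)
    rw [← hsat, Set.mem_preimage, map_add]
    exact hu _ (Set.mem_image_of_mem π hx)
  let Λ : Submodule ℤ (Fin (d - r) → ℝ) :=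
    (LinearMap.range (intCastVec d)).map (π.toLinearMap.restrictScalars ℤ)
  have hΛ : (Λ : Set (Fin (d - r) → ℝ)) = π '' intLattice d := rfl
  have hspan : Submodule.span ℝ (Λ : Set (Fin (d - r) → ℝ)) = ⊤ := by
    rw [hΛ]
    have := Submodule.map_span π.toLinearMap (intLattice d)
    rw [span_intLattice, Submodule.map_top, LinearMap.range_eq_top.mpr hsurj] at this
    exact this.symm
  obtain ⟨s, hs0, hsK, hcard⟩ :=
    IsMaximalFree.exists_halfspaceInter_card_le (Λ := Λ) hπ hneπ hbπ hspan
  refine ⟨s.image fun p => (p.1.comp π, p.2), ?_, ?_, Finset.card_image_le.trans hcard⟩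
  · intro p hp
    obtain ⟨q, hq, rfl⟩ := Finset.mem_image.mp hp
    intro h0
    refine hs0 q hq (ContinuousLinearMap.ext fun y => ?_)
    obtain ⟨x, rfl⟩ := hsurj y
    exact DFunLike.congr_fun h0 x
  · rw [← hsat, hsK]
    ext x
    simp only [halfspaceInter, Set.mem_preimage, Set.mem_ofPred_eq, Finset.forall_mem_image,
      ContinuousLinearMap.comp_apply]

end IntegerLattice

section Facets

variable {E : Type*} [NormedAddCommGroup E] [NormedSpace ℝ E]

/-- A nonempty convex set has a point from which every point of the affine span can be reflected
back into the set, after scaling. -/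
theorem Convex.exists_mem_forall_affineSpan [FiniteDimensional ℝ E] {F : Set E}
    (hF : Convex ℝ F) (hne : F.Nonempty) :
    ∃ z ∈ F, ∀ y ∈ affineSpan ℝ F, ∃ ε > (0 : ℝ), z - ε • (y - z) ∈ F := by
  obtain ⟨z, hz⟩ := hne.intrinsicInterior hF
  obtain ⟨z', hz', rfl⟩ := mem_intrinsicInterior.mp hz
  refine ⟨z', Set.mem_preimage.mp (interior_subset hz'), fun y hy => ?_⟩
  have hmem : ∀ t : ℝ, AffineMap.lineMap (z' : E) y (-t) ∈ affineSpan ℝ F := fun t =>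
    AffineMap.lineMap_mem _ z'.2 hy
  let g : ℝ → affineSpan ℝ F := fun t => ⟨AffineMap.lineMap (z' : E) y (-t), hmem t⟩
  have hg : Continuous g :=
    Continuous.subtype_mk (AffineMap.lineMap_continuous.comp continuous_neg) hmem
  have hg0 : g 0 = z' := Subtype.ext (by simp [g])
  have hnhds : ∀ᶠ t in nhds (0 : ℝ), g t ∈ interior ((↑) ⁻¹' F : Set (affineSpan ℝ F)) :=
    hg.continuousAt.eventually (by
      rw [hg0]
      exact isOpen_interior.mem_nhds hz')
  obtain ⟨ε, hε, hpos⟩ := ((hnhds.filter_mono nhdsWithin_le_nhds).and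
    (self_mem_nhdsWithin (a := (0 : ℝ)) (s := Set.Ioi 0))).exists
  refine ⟨ε, hpos, ?_⟩
  have : (g ε : E) ∈ F := Set.mem_preimage.mp (interior_subset hε)
  simpa [g, AffineMap.lineMap_apply, sub_eq_add_neg, add_comm] using this

theorem IsFacet.exists_eq_inter {d : ℕ} {s : Finset (StrongDual ℝ (Fin d → ℝ) × ℝ)}
    (hs : ∀ p ∈ s, p.1 ≠ 0) {F : Set (Fin d → ℝ)} (hF : IsFacet d (halfspaceInter s) F) :
    ∃ p ∈ s, F = halfspaceInter s ∩ {x | p.1 x = p.2} := by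
  obtain ⟨hne, hext, hconv, hrank⟩ := hF
  obtain ⟨z, hz, hrefl⟩ := hconv.exists_mem_forall_affineSpan hne
  have hFK : F ⊆ halfspaceInter s := hext.1
  obtain ⟨p, hp, hpz⟩ : ∃ p ∈ s, p.1 z = p.2 := by
    by_contra! hcon
    have hzint : z ∈ interior (halfspaceInter s) := by
      rw [interior_halfspaceInter hs]
      exact fun p hp => lt_of_le_of_ne (hFK hz p hp) (hcon p hp)
    have hrefl' : Filter.Tendsto (fun x => z - (x - z)) (nhds z) (nhds z) := by
      have : Continuous fun x : Fin d → ℝ => z - (x - z) := by fun_prop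
      simpa using this.tendsto z
    have hzF : z ∈ interior F := by
      rw [mem_interior_iff_mem_nhds] at hzint ⊢
      filter_upwards [hzint, hrefl' hzint] with x hx hx'
      refine hext.2 hx hx' hz ⟨1 / 2, 1 / 2, by norm_num, by norm_num, by norm_num, ?_⟩
      ext i
      simp
      ring
    have htop := hconv.interior_nonempty_iff_affineSpan_eq_top.mp ⟨z, hzF⟩
    rw [htop, AffineSubspace.direction_top, finrank_top, Module.finrank_fin_fun] at hrank
    omega
  refine ⟨p, hp, ?_⟩
  have hFp : ∀ y ∈ F, p.1 y = p.2 := by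
    intro y hy
    obtain ⟨ε, hε, hmem⟩ := hrefl y (subset_affineSpan ℝ F hy)
    have h1 := hFK hmem p hp
    have h2 := hFK hy p hp
    simp only [map_sub, map_smul, smul_eq_mul] at h1
    nlinarith
  have hdir : (affineSpan ℝ F).direction ≤ LinearMap.ker p.1.toLinearMap := by
    rw [direction_affineSpan, vectorSpan_def, Submodule.span_le]
    rintro _ ⟨a, ha, b, hb, rfl⟩
    simp [hFp a ha, hFp b hb]
  have hker : Module.finrank ℝ (LinearMap.ker p.1.toLinearMap) + 1 = d := by
    have hp0 : p.1.toLinearMap ≠ 0 := fun h0 =>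
      hs p hp (ContinuousLinearMap.ext fun x => DFunLike.congr_fun h0 x)
    simpa using Module.Dual.finrank_ker_add_one_of_ne_zero hp0
  have hdir_eq := Submodule.eq_of_le_of_finrank_eq hdir (by omega)
  refine Set.Subset.antisymm (fun y hy => ⟨hFK hy, hFp y hy⟩) ?_
  rintro y ⟨hyK, hyp⟩
  have hyspan : y ∈ affineSpan ℝ F := by
    rw [← AffineSubspace.vsub_right_mem_direction_iff_mem (subset_affineSpan ℝ F hz), hdir_eq]
    have hyp' : p.1 y = p.2 := hyp
    simp [hyp', hpz]
  obtain ⟨ε, hε, hmem⟩ := hrefl y hyspan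
  refine hext.2 hyK (hFK hmem) hz
    ⟨ε / (1 + ε), 1 / (1 + ε), by positivity, by positivity, by field_simp; ring, ?_⟩
  ext i
  simp only [Pi.add_apply, Pi.smul_apply, Pi.sub_apply, smul_eq_mul]
  field_simp
  ring

theorem isPolyhedron_halfspaceInter {d : ℕ} (s : Finset (StrongDual ℝ (Fin d → ℝ) × ℝ)) :
    IsPolyhedron d (halfspaceInter s) := by
  refine ⟨s.card, fun i j => (s.equivFin.symm i).1.1 (Pi.single j 1),
    fun i => (s.equivFin.symm i).1.2, ?_⟩
  have happly : ∀ (f : StrongDual ℝ (Fin d → ℝ)) (x : Fin d → ℝ),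
      ∑ j, f (Pi.single j 1) * x j = f x := by
    intro f x
    conv_rhs => rw [pi_eq_sum_univ' x, map_sum]
    refine Finset.sum_congr rfl fun j _ => ?_
    rw [map_smul, smul_eq_mul, mul_comm]
  ext x
  simp only [happly, halfspaceInter, Set.mem_ofPred_eq]
  refine ⟨fun hx i => hx _ (s.equivFin.symm i).2, fun hx p hp => ?_⟩
  simpa using hx (s.equivFin ⟨p, hp⟩)

end Facets

theorem IsMaxLatticeFree.isMaximalFree {d : ℕ} {K : Set (Fin d → ℝ)}
    (hK : IsMaxLatticeFree d K) : IsMaximalFree (intLattice d) K where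
  isClosed := hK.1.1
  convex := hK.1.2.1
  disjoint := Set.disjoint_iff_inter_eq_empty.mpr hK.1.2.2
  eq_of_subset := fun K' hcl hconv hdisj hsub =>
    hK.2 K' ⟨hcl, hconv, Set.disjoint_iff_inter_eq_empty.mp hdisj⟩ hsub

/-- A `d`-dimensional maximal lattice-free set in `ℝ^d` whose
recession cone has dimension `r` is a polyhedron with at most `2^(d-r)` facets. -/
theorem stmt_0 (d r : ℕ) (K : Set (Fin d → ℝ))
    (hK : IsMaxLatticeFree d K) (hdim : affineSpan ℝ K = ⊤)
    (hr : Module.finrank ℝ (Submodule.span ℝ (recCone d K)) = r) :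
    IsPolyhedron d K ∧ {F : Set (Fin d → ℝ) | IsFacet d K F}.Finite ∧
      {F : Set (Fin d → ℝ) | IsFacet d K F}.ncard ≤ 2 ^ (d - r) := by
  classical
  have hne : (interior K).Nonempty :=
    hK.1.2.1.interior_nonempty_iff_affineSpan_eq_top.mpr hdim
  obtain ⟨s, hs0, rfl, hcard⟩ := hK.isMaximalFree.exists_halfspaceInter_of_intLattice hne hr
  have hsub : {F : Set (Fin d → ℝ) | IsFacet d (halfspaceInter s) F} ⊆
      (s.image fun p => halfspaceInter s ∩ {x | p.1 x = p.2} : Finset (Set (Fin d → ℝ))) := by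
    intro F hF
    obtain ⟨p, hp, rfl⟩ := IsFacet.exists_eq_inter hs0 hF
    exact Finset.mem_coe.mpr (Finset.mem_image_of_mem _ hp)
  refine ⟨isPolyhedron_halfspaceInter s, (Finset.finite_toSet _).subset hsub, ?_⟩
  calc _ ≤ _ := Set.ncard_le_ncard hsub (Finset.finite_toSet _)
    _ ≤ s.card := by
      rw [Set.ncard_coe_finset]
      exact Finset.card_image_le
    _ ≤ 2 ^ (d - r) := hcard
end

section
/- Let K be a d-dimensional maximal lattice-free set in ℝ^d and let r be the dimension of the recession cone rec(K). Then rec(K) is a linear subspace of ℝ^d that is spanned by r vectors from ℤ^d. -/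
open Pointwise

section ClosedSubgroups

open Filter Topology

/-- A subgroup of a finite-dimensional real normed space that is not discrete has a whole line in
its closure. -/
theorem exists_line_subset_closure_of_not_discrete {E : Type*} [NormedAddCommGroup E]
    [NormedSpace ℝ E] [FiniteDimensional ℝ E] (H : AddSubgroup E) (hH : ¬ DiscreteTopology H) :
    ∃ e : E, e ≠ 0 ∧ ∀ t : ℝ, t • e ∈ closure (H : Set E) := by
  have hsmall : ∀ ε : ℝ, 0 < ε → ∃ h ∈ H, h ≠ 0 ∧ ‖h‖ < ε := by
    intro ε hε
    by_contra! hcon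
    refine hH (discreteTopology_iff_isOpen_singleton_zero.2 (Metric.isOpen_iff.2 ?_))
    rintro x rfl
    refine ⟨ε, hε, fun y hy => ?_⟩
    by_contra hne
    have hlt : ‖(y : E)‖ < ε := by simpa using hy
    exact (hcon y y.2 fun h0 => hne (Subtype.ext h0)).not_gt hlt
  choose h hmem hne hlt using fun n : ℕ => hsmall (1 / ((n : ℝ) + 1)) Nat.one_div_pos_of_nat
  have hpos : ∀ n, 0 < ‖h n‖ := fun n => norm_pos_iff.2 (hne n)
  have hnorm : Tendsto (fun n => ‖h n‖) atTop (𝓝 0) :=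
    squeeze_zero (fun n => norm_nonneg _) (fun n => (hlt n).le)
      tendsto_one_div_add_atTop_nhds_zero_nat
  have hsphere : ∀ n, ‖h n‖⁻¹ • h n ∈ Metric.sphere (0 : E) 1 := by
    intro n
    simp [norm_smul, (hpos n).ne']
  have : ProperSpace E := FiniteDimensional.proper_real E
  obtain ⟨e, he, φ, hφ, hlim⟩ := (isCompact_sphere (0 : E) 1).tendsto_subseq hsphere
  refine ⟨e, ?_, fun t => ?_⟩
  · rintro rfl
    simp at he
  have hfloor : Tendsto (fun n => (⌊t / ‖h (φ n)‖⌋ : ℝ) * ‖h (φ n)‖) atTop (𝓝 t) := by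
    rw [tendsto_iff_dist_tendsto_zero]
    refine squeeze_zero (fun n => dist_nonneg) (fun n => ?_) (hnorm.comp hφ.tendsto_atTop)
    have hp := hpos (φ n)
    have h1 : (⌊t / ‖h (φ n)‖⌋ : ℝ) * ‖h (φ n)‖ ≤ t := (le_div_iff₀ hp).1 (Int.floor_le _)
    have h2 : t < ((⌊t / ‖h (φ n)‖⌋ : ℝ) + 1) * ‖h (φ n)‖ :=
      (div_lt_iff₀ hp).1 (Int.lt_floor_add_one _)
    rw [Real.dist_eq, abs_le]
    constructor <;> simp only [Function.comp_apply] <;> linarith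
  refine mem_closure_of_tendsto (hfloor.smul hlim) (Eventually.of_forall fun n => ?_)
  have hp := (hpos (φ n)).ne'
  have heq : ((⌊t / ‖h (φ n)‖⌋ : ℝ) * ‖h (φ n)‖) • ((fun n => ‖h n‖⁻¹ • h n) ∘ φ) n
      = ⌊t / ‖h (φ n)‖⌋ • h (φ n) := by
    rw [Function.comp_apply, smul_smul, mul_assoc, mul_inv_cancel₀ hp, mul_one,
      Int.cast_smul_eq_zsmul]
  rw [heq]
  exact H.zsmul_mem (hmem _) _

/-- Simultaneous Diophantine approximation with arbitrarily large multipliers. -/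
theorem exists_nat_smul_near_int {ι : Type*} [Fintype ι] (u : ι → ℝ) (N : ℕ) {ε : ℝ} (hε : 0 < ε) :
    ∃ n : ℕ, N ≤ n ∧ ∃ w : ι → ℤ, ‖(fun i => (w i : ℝ)) - (n : ℝ) • u‖ < ε := by
  have hmem : ∀ k : ℕ, (fun i => Int.fract ((k : ℝ) * u i)) ∈ Set.Icc (0 : ι → ℝ) 1 := fun k =>
    ⟨fun i => Int.fract_nonneg _, fun i => (Int.fract_lt_one _).le⟩
  obtain ⟨a, -, φ, hφ, hlim⟩ := isCompact_Icc.tendsto_subseq hmem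
  obtain ⟨M, hM⟩ := Metric.cauchySeq_iff.1 hlim.cauchySeq ε hε
  have hge : φ M + N ≤ φ (M + N) := by
    induction N with
    | zero => simp
    | succ N ih =>
      have := hφ (Nat.lt_succ_self (M + N))
      grind
  refine ⟨φ (M + N) - φ M, by omega,
    fun i => ⌊(φ (M + N) : ℝ) * u i⌋ - ⌊(φ M : ℝ) * u i⌋, ?_⟩
  have hd := hM M le_rfl (M + N) (Nat.le_add_right _ _)
  rw [dist_eq_norm] at hd
  refine lt_of_eq_of_lt (congrArg norm (funext fun i => ?_)) hd
  simp only [Function.comp_apply, Pi.sub_apply, Pi.smul_apply, smul_eq_mul, Int.fract]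
  rw [Nat.cast_sub (by omega)]
  push_cast
  ring

end ClosedSubgroups

section RationalSubspaces

/-- The inclusion of `ℤ^d` into `ℝ^d`. -/
def intVecCast (d : ℕ) : (Fin d → ℤ) →ₗ[ℤ] (Fin d → ℝ) :=
  ((Int.castAddHom ℝ).compLeft (Fin d)).toIntLinearMap

theorem intVecCast_apply {d : ℕ} (z : Fin d → ℤ) : intVecCast d z = fun i => (z i : ℝ) := rfl

theorem intVecCast_injective (d : ℕ) : Function.Injective (intVecCast d) := fun x y h => by
  ext i
  have := congrFun h i
  simpa [intVecCast_apply] using this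

theorem range_intVecCast_eq_span (d : ℕ) :
    LinearMap.range (intVecCast d) = Submodule.span ℤ (Set.range (Pi.basisFun ℝ (Fin d))) := by
  ext x
  rw [Module.Basis.mem_span_iff_repr_mem]
  constructor
  · rintro ⟨z, rfl⟩ i
    exact ⟨z i, rfl⟩
  · intro h
    choose z hz using h
    exact ⟨z, funext hz⟩

theorem span_range_intVecCast (d : ℕ) :
    Submodule.span ℝ (Set.range (intVecCast d)) = ⊤ := by
  have h := range_intVecCast_eq_span d
  rw [← LinearMap.coe_range, h]
  exact ZSpan.span_top _

/-- If the image of `ℤ^d` under a surjective linear map is discrete, then the kernel of that map is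
spanned by integer vectors. -/
theorem exists_int_span_eq_ker {d : ℕ} {F : Type*} [NormedAddCommGroup F] [NormedSpace ℝ F]
    [FiniteDimensional ℝ F] (p : (Fin d → ℝ) →ₗ[ℝ] F) (hp : Function.Surjective p)
    (hdisc : DiscreteTopology (LinearMap.range ((p.restrictScalars ℤ).comp (intVecCast d)))) :
    ∃ v : Fin (Module.finrank ℝ (LinearMap.ker p)) → (Fin d → ℤ),
      Submodule.span ℝ (Set.range fun i => intVecCast d (v i)) = LinearMap.ker p := by
  set q := (p.restrictScalars ℤ).comp (intVecCast d)
  have : ProperSpace F := FiniteDimensional.proper_real F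
  have : IsZLattice ℝ (LinearMap.range q) := ⟨by
    have : (LinearMap.range q : Set F) = p '' Set.range (intVecCast d) := by
      rw [LinearMap.coe_range, ← Set.range_comp]
      rfl
    rw [this, Submodule.span_image, span_range_intVecCast, Submodule.map_top,
      LinearMap.range_eq_top.2 hp]⟩
  have hrank : Module.finrank ℤ (LinearMap.range q) = Module.finrank ℝ F := ZLattice.rank ℝ _
  have hnullZ : Module.finrank ℤ (LinearMap.range q) + Module.finrank ℤ (LinearMap.ker q) = d := by
    rw [← q.quotKerEquivRange.finrank_eq, Submodule.finrank_quotient_add_finrank,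
      Module.finrank_pi, Fintype.card_fin]
  have hnullR : Module.finrank ℝ F + Module.finrank ℝ (LinearMap.ker p) = d := by
    have := p.finrank_range_add_finrank_ker
    rwa [LinearMap.range_eq_top.2 hp, finrank_top, Module.finrank_pi, Fintype.card_fin] at this
  have hker : Module.finrank ℤ (LinearMap.ker q) = Module.finrank ℝ (LinearMap.ker p) := by omega
  let b := Module.finBasisOfFinrankEq ℤ (LinearMap.ker q) hker
  refine ⟨fun i => (b i : Fin d → ℤ), Submodule.eq_of_le_of_finrank_eq ?_ ?_⟩
  · rw [Submodule.span_le]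
    rintro _ ⟨i, rfl⟩
    exact (b i).2
  · have hsub : Submodule.span ℤ (Set.range fun i => intVecCast d (b i)) ≤
        Submodule.span ℤ (Set.range (Pi.basisFun ℝ (Fin d))) := by
      rw [← range_intVecCast_eq_span, Submodule.span_le]
      rintro _ ⟨i, rfl⟩
      exact ⟨_, rfl⟩
    have hd : DiscreteTopology (Submodule.span ℤ (Set.range fun i => intVecCast d (b i))) :=
      DiscreteTopology.of_subset (inferInstanceAs (DiscreteTopology
        (Submodule.span ℤ (Set.range (Pi.basisFun ℝ (Fin d)))))) hsub
    have hli : LinearIndependent ℤ fun i => intVecCast d (b i) :=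
      (b.linearIndependent.map' _ (LinearMap.ker q).ker_subtype).map' _
        (LinearMap.ker_eq_bot.2 (intVecCast_injective d))
    have hfin := Real.finrank_eq_int_finrank_of_discrete hd
    rw [Set.finrank, Set.finrank, finrank_span_eq_card hli, Fintype.card_fin] at hfin
    exact hfin

end RationalSubspaces

section MaximalLatticeFree

variable {d : ℕ} {K : Set (Fin d → ℝ)}

theorem add_mem_interior_of_mem_recCone {x u : Fin d → ℝ} (hu : u ∈ recCone d K)
    (hx : x ∈ interior K) : x + u ∈ interior K := by
  have hsub : (· + u) '' interior K ⊆ interior K :=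
    interior_maximal (by rintro _ ⟨y, hy, rfl⟩; exact hu y (interior_subset hy))
      ((Homeomorph.addRight u).isOpenMap _ isOpen_interior)
  exact hsub ⟨x, hx, rfl⟩

theorem smul_mem_recCone (hK : Convex ℝ K) {u : Fin d → ℝ} (hu : u ∈ recCone d K) {t : ℝ}
    (ht : 0 ≤ t) : t • u ∈ recCone d K := by
  have hnat : ∀ n : ℕ, ∀ x ∈ K, x + (n : ℝ) • u ∈ K := by
    intro n
    induction n with
    | zero => simp
    | succ n ih =>
      intro x hx
      rw [Nat.cast_succ, add_smul, one_smul, ← add_assoc]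
      exact hu _ (ih x hx)
  intro x hx
  obtain ⟨n, hn⟩ := exists_nat_gt t
  have hn0 : (0 : ℝ) < n := ht.trans_lt hn
  have := hK.add_smul_mem hx (hnat n x hx) ⟨div_nonneg ht hn0.le, (div_le_one hn0).2 hn.le⟩
  rwa [smul_smul, div_mul_cancel₀ _ hn0.ne'] at this

/-- If translating the interior of a full-dimensional maximal lattice-free set along a line never
meets the lattice, then the line lies in the recession cone. -/
theorem IsMaxLatticeFree.smul_mem_recCone_of_forall_notMem (hK : IsMaxLatticeFree d K)
    (hne : (interior K).Nonempty) {u : Fin d → ℝ}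
    (hu : ∀ x ∈ interior K, ∀ t : ℝ, x + t • u ∉ intLattice d) (t : ℝ) :
    t • u ∈ recCone d K := by
  obtain ⟨⟨hcl, hconv, -⟩, hmax⟩ := hK
  set S : Set (Fin d → ℝ) := interior K + (Submodule.span ℝ {u} : Set (Fin d → ℝ))
  have hSopen : IsOpen S := isOpen_interior.add_right
  have hSconv : Convex ℝ S := hconv.interior.add (Submodule.convex _)
  have hKS : interior K ⊆ S := fun x hx => ⟨x, hx, 0, Submodule.zero_mem _, add_zero x⟩
  have hSt : ∀ x ∈ S, x + t • u ∈ S := by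
    rintro _ ⟨x, hx, w, hw, rfl⟩
    exact ⟨x, hx, w + t • u, Submodule.add_mem _ hw
      (Submodule.smul_mem _ _ (Submodule.mem_span_singleton_self u)), (add_assoc _ _ _).symm⟩
  have hfree : IsLatticeFree d (closure S) := by
    refine ⟨isClosed_closure, hSconv.closure, ?_⟩
    rw [hSconv.interior_closure_eq_interior_of_nonempty_interior
      (by rw [hSopen.interior_eq]; exact hne.mono hKS), hSopen.interior_eq,
      Set.eq_empty_iff_forall_notMem]
    rintro _ ⟨⟨x, hx, w, hw, rfl⟩, hz⟩
    obtain ⟨s, rfl⟩ := Submodule.mem_span_singleton.1 hw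
    exact hu x hx s hz
  have hKcl : K ⊆ closure S := by
    rw [← hcl.closure_eq, ← hconv.closure_interior_eq_closure_of_nonempty_interior hne]
    exact closure_mono hKS
  have heq := hmax _ hfree hKcl
  intro x hx
  rw [← heq] at hx ⊢
  exact map_mem_closure (f := (· + t • u)) (by fun_prop) hx hSt

/-- The recession cone of a full-dimensional maximal lattice-free set is closed under real
scalar multiplication. -/
theorem IsMaxLatticeFree.smul_mem_recCone (hK : IsMaxLatticeFree d K)
    (hne : (interior K).Nonempty) {u : Fin d → ℝ} (hu : u ∈ recCone d K) (t : ℝ) :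
    t • u ∈ recCone d K := by
  refine hK.smul_mem_recCone_of_forall_notMem hne ?_ t
  rintro x hx s ⟨z, hz⟩
  have hz' : (fun i => (z i : ℝ)) = x + s • u := hz
  obtain ⟨ε, hε, hball⟩ := Metric.isOpen_iff.1 isOpen_interior x hx
  obtain ⟨N, hN⟩ := exists_nat_ge (-s)
  obtain ⟨n, hn, w, hw⟩ := exists_nat_smul_near_int u N hε
  have hns : 0 ≤ s + n := by
    have : (N : ℝ) ≤ n := by exact_mod_cast hn
    linarith
  have hy : x + ((fun i => (w i : ℝ)) - (n : ℝ) • u) ∈ interior K :=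
    hball (by simpa [dist_eq_norm] using hw)
  have hyz := add_mem_interior_of_mem_recCone
    (_root_.smul_mem_recCone hK.1.2.1 hu hns) hy
  have hlat : x + ((fun i => (w i : ℝ)) - (n : ℝ) • u) + (s + n) • u ∈ intLattice d := by
    refine ⟨z + w, ?_⟩
    have : (fun i => ((z + w) i : ℝ)) = (fun i => (z i : ℝ)) + fun i => (w i : ℝ) := by
      ext i
      simp
    change (fun i => ((z + w) i : ℝ)) = _
    rw [this, hz', add_smul]
    abel
  exact Set.eq_empty_iff_forall_notMem.1 hK.1.2.2 _ ⟨hyz, hlat⟩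

/-- The recession cone of a full-dimensional maximal lattice-free set, as a linear subspace. -/
def recSubmodule (hK : IsMaxLatticeFree d K) (hne : (interior K).Nonempty) :
    Submodule ℝ (Fin d → ℝ) where
  carrier := recCone d K
  add_mem' {a b} ha hb x hx := by
    rw [← add_assoc]
    exact hb _ (ha x hx)
  zero_mem' x hx := by rwa [add_zero]
  smul_mem' t _ hu := hK.smul_mem_recCone hne hu t

/-- The lattice projects to a discrete subgroup modulo the recession cone of a full-dimensional
maximal lattice-free set. -/
theorem IsMaxLatticeFree.discrete_image (hK : IsMaxLatticeFree d K) (hne : (interior K).Nonempty)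
    {F : Type*} [NormedAddCommGroup F] [NormedSpace ℝ F] [FiniteDimensional ℝ F]
    (p : (Fin d → ℝ) →ₗ[ℝ] F) (hp : Function.Surjective p)
    (hker : LinearMap.ker p = recSubmodule hK hne) :
    DiscreteTopology (LinearMap.range ((p.restrictScalars ℤ).comp (intVecCast d))) := by
  set H := (LinearMap.range ((p.restrictScalars ℤ).comp (intVecCast d))).toAddSubgroup
  by_contra hdisc
  obtain ⟨e, he, hline⟩ := exists_line_subset_closure_of_not_discrete H hdisc
  obtain ⟨u, rfl⟩ := hp e
  have hopen : IsOpen (p '' interior K) :=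
    p.isOpenMap_of_finiteDimensional hp _ isOpen_interior
  have hdisj : Disjoint (p '' interior K) (closure (H : Set F)) := by
    refine Disjoint.closure_right (Set.disjoint_left.2 ?_) hopen
    rintro _ ⟨x, hx, rfl⟩ ⟨z, hz⟩
    have hz' : p (intVecCast d z) = p x := hz
    have hmem : intVecCast d z - x ∈ recSubmodule hK hne := by
      rw [← hker, LinearMap.mem_ker, map_sub, hz', sub_self]
    have hint := add_mem_interior_of_mem_recCone hmem hx
    rw [add_sub_cancel] at hint
    exact Set.eq_empty_iff_forall_notMem.1 hK.1.2.2 _ ⟨hint, z, rfl⟩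
  have hu : u ∈ recCone d K := by
    have := hK.smul_mem_recCone_of_forall_notMem hne (u := u) ?_ 1
    · rwa [one_smul] at this
    rintro x hx t ⟨z, hz⟩
    have hz' : intVecCast d z = x + t • u := hz
    refine Set.disjoint_left.1 hdisj ⟨x, hx, rfl⟩ ?_
    have hpx : p x = p (intVecCast d z) - t • p u := by
      rw [hz', map_add, map_smul, add_sub_cancel_right]
    rw [hpx]
    exact H.topologicalClosure.sub_mem (subset_closure ⟨z, rfl⟩) (hline t)
  exact he (LinearMap.mem_ker.1 (hker ▸ hu : u ∈ LinearMap.ker p))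

end MaximalLatticeFree

/-- The recession cone of a `d`-dimensional maximal lattice-free
set is a linear subspace spanned by `r` vectors from `ℤ^d`, where `r` is its
dimension. -/
theorem stmt_1 (d r : ℕ) (K : Set (Fin d → ℝ))
    (hK : IsMaxLatticeFree d K) (hdim : affineSpan ℝ K = ⊤)
    (hr : Module.finrank ℝ (Submodule.span ℝ (recCone d K)) = r) :
    ∃ v : Fin r → (Fin d → ℤ),
      recCone d K =
        (Submodule.span ℝ (Set.range fun i => fun j => ((v i j : ℤ) : ℝ)) :
          Set (Fin d → ℝ)) := by
  have hne : (interior K).Nonempty :=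
    hK.1.2.1.interior_nonempty_iff_affineSpan_eq_top.2 hdim
  set L := recSubmodule hK hne
  have hLK : (L : Set (Fin d → ℝ)) = recCone d K := rfl
  let e : ((Fin d → ℝ) ⧸ L) ≃ₗ[ℝ] (Fin (Module.finrank ℝ ((Fin d → ℝ) ⧸ L)) → ℝ) :=
    (Module.finBasis ℝ ((Fin d → ℝ) ⧸ L)).equivFun
  let p := e.toLinearMap ∘ₗ L.mkQ
  have hp : Function.Surjective p := e.surjective.comp L.mkQ_surjective
  have hker : LinearMap.ker p = L := by
    rw [LinearEquiv.ker_comp, Submodule.ker_mkQ]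
  obtain ⟨v, hv⟩ := exists_int_span_eq_ker p hp (hK.discrete_image hne p hp hker)
  have hfin : Module.finrank ℝ (LinearMap.ker p) = r := by
    rw [hker, ← hr, ← hLK, Submodule.span_eq]
  subst hfin
  exact ⟨v, congrArg SetLike.coe (hker.symm.trans hv.symm)⟩
end

section
/- Let K be a d-dimensional maximal lattice-free set in ℝ^d. Then K is a polyhedron and the relative interior of every facet of K contains at least one point of ℤ^d. -/
open Pointwise

/-- The polar of `K` with respect to `p`. -/
def polarAt {d : ℕ} (p : Fin d → ℝ) (K : Set (Fin d → ℝ)) : Set (Fin d → ℝ) :=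
  {a | ∀ x ∈ K, a ⬝ᵥ (x - p) ≤ 1}

theorem isCompact_polarAt {d : ℕ} {p : Fin d → ℝ} {K : Set (Fin d → ℝ)}
    (hp : p ∈ interior K) : IsCompact (polarAt p K) := by
  have hclosed : IsClosed (polarAt p K) := by
    have : polarAt p K = ⋂ x ∈ K, {a : Fin d → ℝ | a ⬝ᵥ (x - p) ≤ 1} := by
      ext a; simp [polarAt]
    rw [this]
    exact isClosed_biInter fun x _ =>
      isClosed_le (continuous_id.dotProduct continuous_const) continuous_const
  obtain ⟨r, hr, hball⟩ := Metric.nhds_basis_closedBall.mem_iff.1 (mem_interior_iff_mem_nhds.1 hp)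
  refine (isCompact_closedBall (0 : Fin d → ℝ) (1 / r)).of_isClosed_subset hclosed ?_
  intro a ha
  rw [mem_closedBall_zero_iff, pi_norm_le_iff_of_nonneg (by positivity)]
  intro j
  have key : ∀ s : ℝ, |s| = r → a j * s ≤ 1 := by
    intro s hs
    have := ha (p + Pi.single j s) (hball (by simp [Pi.norm_single, hs]))
    simpa using this
  have h1 := key r (abs_of_pos hr)
  have h2 := key (-r) (by rw [abs_neg, abs_of_pos hr])
  rw [Real.norm_eq_abs, abs_le, ← neg_div, div_le_iff₀ hr, le_div_iff₀ hr]
  constructor <;> linarith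

theorem smul_mem_polarAt {d : ℕ} {p a : Fin d → ℝ} {K : Set (Fin d → ℝ)}
    (ha : a ∈ polarAt p K) {t : ℝ} (ht₀ : 0 ≤ t) (ht₁ : t ≤ 1) : t • a ∈ polarAt p K := by
  intro x hx
  rw [smul_dotProduct, smul_eq_mul]
  nlinarith [ha x hx]

theorem exists_mem_polarAt_one_le {d : ℕ} {p z : Fin d → ℝ} {K : Set (Fin d → ℝ)}
    (hK : Convex ℝ K) (hp : p ∈ interior K) (hz : z ∉ interior K) :
    ∃ a ∈ polarAt p K, 1 ≤ a ⬝ᵥ (z - p) := by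
  obtain ⟨f, hf⟩ := geometric_hahn_banach_open_point hK.interior isOpen_interior hz
  have hfz : ∀ x ∈ K, f x ≤ f z := by
    intro x hx
    have hx' : x ∈ closure (interior K) := by
      rw [hK.closure_interior_eq_closure_of_nonempty_interior ⟨p, hp⟩]
      exact subset_closure hx
    exact closure_minimal (fun y hy => (hf y hy).le)
      (isClosed_le f.continuous continuous_const) hx'
  have hpos : 0 < f z - f p := sub_pos.2 (hf p hp)
  have hrep : ∀ x, (fun j => f (Pi.single j 1)) ⬝ᵥ x = f x := by
    intro x
    conv_rhs => rw [← Finset.univ_sum_single x]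
    rw [map_sum, dotProduct]
    refine Finset.sum_congr rfl fun j _ => ?_
    rw [mul_comm, ← smul_eq_mul, ← map_smul, ← Pi.single_smul, smul_eq_mul, mul_one]
  refine ⟨(f z - f p)⁻¹ • fun j => f (Pi.single j 1), fun x hx => ?_, ?_⟩
  · rw [smul_dotProduct, hrep, map_sub, smul_eq_mul, inv_mul_le_iff₀ hpos]
    linarith [hfz x hx]
  · rw [smul_dotProduct, hrep, map_sub, smul_eq_mul, inv_mul_cancel₀ hpos.ne']

/-- The integer vector `z` as a real vector. -/
def intVec {d : ℕ} (z : Fin d → ℤ) : Fin d → ℝ := fun i => (z i : ℝ)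

/-- The residue of an integer vector modulo `2`. -/
def parity {d : ℕ} (z : Fin d → ℤ) : Fin d → ZMod 2 := fun i => (z i : ZMod 2)

theorem exists_midpoint_of_parity_eq {d : ℕ} {b z w : Fin d → ℤ}
    (hz : z ∈ Finset.Icc (-b) b) (hw : w ∈ Finset.Icc (-b) b) (h : parity z = parity w) :
    ∃ m ∈ Finset.Icc (-b) b, intVec z + intVec w = (2 : ℝ) • intVec m := by
  have hm : ∀ i, ∃ m : ℤ, z i + w i = 2 * m := by
    intro i
    have h1 := (ZMod.intCast_eq_intCast_iff _ _ 2).1 (congrFun h i)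
    have h2 : z i % 2 = w i % 2 := h1
    exact ⟨(z i + w i) / 2, by omega⟩
  choose m hm using hm
  simp only [Finset.mem_Icc, Pi.le_def, Pi.neg_apply] at hz hw ⊢
  refine ⟨m, ⟨fun i => ?_, fun i => ?_⟩, ?_⟩
  · have := hz.1 i; have := hw.1 i; have := hm i; omega
  · have := hz.2 i; have := hw.2 i; have := hm i; omega
  · ext i
    simp only [intVec, Pi.add_apply, Pi.smul_apply, smul_eq_mul]
    exact_mod_cast hm i

/-- If every integer point of a box is cut off by some element of the polar, then all of them
are cut off by at most `2 ^ d` elements, indexed by parity classes. -/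
theorem exists_parity_cover {d : ℕ} {p : Fin d → ℝ} {K : Set (Fin d → ℝ)} (b : Fin d → ℤ)
    (hcut : ∀ z ∈ Finset.Icc (-b) b, ∃ a ∈ polarAt p K, 1 ≤ a ⬝ᵥ (intVec z - p)) :
    ∃ F : (Fin d → ZMod 2) → Fin d → ℝ, (∀ σ, F σ ∈ polarAt p K) ∧
      ∀ z ∈ Finset.Icc (-b) b, ∃ σ, 1 ≤ F σ ⬝ᵥ (intVec z - p) := by
  classical
  set Z := Finset.Icc (-b) b
  let φ : (Fin d → ℝ) → (Fin d → ℤ) → ℝ := fun a z => a ⬝ᵥ (intVec z - p)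
  have hφsmul : ∀ t a z, φ (t • a) z = t * φ a z := fun t a z => by
    simp only [φ, smul_dotProduct, smul_eq_mul]
  let S : (Fin d → ℝ) → Finset (Fin d → ℤ) := fun a => Z.filter (1 ≤ φ a ·)
  let Valid : Finset (Fin d → ℤ) × ((Fin d → ℤ) → Fin d → ℝ) → Prop := fun c =>
    (∀ i ∈ c.1, c.2 i ∈ polarAt p K) ∧ ∀ z ∈ Z, ∃ i ∈ c.1, 1 ≤ φ (c.2 i) z
  let μ : Finset (Fin d → ℤ) × ((Fin d → ℤ) → Fin d → ℝ) → ℕ := fun c =>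
    ∑ i ∈ c.1, ((S (c.2 i)).card + 1)
  have hne : {c | Valid c}.Nonempty := by
    choose! f hf using hcut
    exact ⟨(Z, f), fun i hi => (hf i hi).1, fun z hz => ⟨z, hz, (hf z hz).2⟩⟩
  obtain ⟨⟨G, f⟩, ⟨hGA, hGZ⟩, hmin⟩ : ∃ c, Valid c ∧ ∀ c', Valid c' → μ c ≤ μ c' :=
    ⟨Function.argminOn μ _ hne, Function.argminOn_mem μ _ hne,
      fun c' hc' => Function.argminOn_le μ _ hc'⟩
  simp only at hGA hGZ
  -- each member cuts off some point that no other member cuts off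
  have hpriv : ∀ i ∈ G, (Z.filter fun z => ∀ j ∈ G, j ≠ i → φ (f j) z < 1).Nonempty := by
    intro i hi
    by_contra hcon
    rw [Finset.not_nonempty_iff_eq_empty, Finset.filter_eq_empty_iff] at hcon
    have hv : Valid (G.erase i, f) := by
      refine ⟨fun j hj => hGA j (Finset.mem_of_mem_erase hj), fun z hz => ?_⟩
      have := hcon hz
      push Not at this
      obtain ⟨j, hj, hji, h⟩ := this
      exact ⟨j, Finset.mem_erase.2 ⟨hji, hj⟩, h⟩
    have h1 := hmin _ hv
    have h2 := Finset.add_sum_erase G (fun i => (S (f i)).card + 1) hi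
    simp only [μ] at h1
    omega
  -- and one minimising its functional among all points it cuts off
  have hex : ∀ i ∈ G, ∃ z ∈ Z, (∀ j ∈ G, j ≠ i → φ (f j) z < 1) ∧
      ∀ w ∈ Z, 1 ≤ φ (f i) w → φ (f i) z ≤ φ (f i) w := by
    intro i hi
    obtain ⟨z, hz, hzmin⟩ := Finset.exists_min_image _ (φ (f i)) (hpriv i hi)
    rw [Finset.mem_filter] at hz
    refine ⟨z, hz.1, hz.2, ?_⟩
    have hone : ∀ z' ∈ Z, (∀ j ∈ G, j ≠ i → φ (f j) z' < 1) → 1 ≤ φ (f i) z' := by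
      intro z' hz' hz2
      obtain ⟨j, hj, h⟩ := hGZ z' hz'
      by_cases hji : j = i
      · rwa [← hji]
      · exact absurd h (not_le.2 (hz2 j hj hji))
    have hz1 := hone z hz.1 hz.2
    have hzpos : 0 < φ (f i) z := by linarith
    set t := (φ (f i) z)⁻¹ with ht
    have ht0 : 0 < t := inv_pos.2 hzpos
    have ht1 : t ≤ 1 := inv_le_one_of_one_le₀ hz1
    have hle : ∀ w, 1 ≤ φ (t • f i) w ↔ φ (f i) z ≤ φ (f i) w := by
      intro w
      rw [hφsmul, ht, inv_mul_eq_div, one_le_div hzpos]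
    have hv : Valid (G, Function.update f i (t • f i)) := by
      refine ⟨fun j hj => ?_, fun w hw => ?_⟩
      · by_cases hji : j = i
        · subst hji
          simpa using smul_mem_polarAt (hGA j hj) ht0.le ht1
        · simpa [hji] using hGA j hj
      · by_cases hwp : ∀ j ∈ G, j ≠ i → φ (f j) w < 1
        · refine ⟨i, hi, ?_⟩
          simp only [Function.update_self]
          exact (hle w).2 (hzmin w (Finset.mem_filter.2 ⟨hw, hwp⟩))
        · push Not at hwp
          obtain ⟨j, hj, hji, h⟩ := hwp
          exact ⟨j, hj, by simpa [hji] using h⟩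
    have h1 := hmin _ hv
    simp only [μ] at h1
    rw [← Finset.add_sum_erase G _ hi, ← Finset.add_sum_erase G _ hi] at h1
    have h2 : ∑ x ∈ G.erase i, ((S (Function.update f i (t • f i) x)).card + 1) =
        ∑ x ∈ G.erase i, ((S (f x)).card + 1) :=
      Finset.sum_congr rfl fun x hx => by
        rw [Function.update_of_ne (Finset.ne_of_mem_erase hx)]
    rw [h2, Function.update_self] at h1
    have hsub : S (t • f i) ⊆ S (f i) := by
      intro w hw
      simp only [S, Finset.mem_filter] at hw ⊢
      exact ⟨hw.1, hz1.trans ((hle w).1 hw.2)⟩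
    have heq := Finset.eq_of_subset_of_card_le hsub (by omega)
    intro w hw hw1
    have hwS : w ∈ S (t • f i) := by
      rw [heq]
      exact Finset.mem_filter.2 ⟨hw, hw1⟩
    exact (hle w).1 (Finset.mem_filter.1 hwS).2
  choose! ζ hζZ hζpriv hζmin using hex
  have hinj : ∀ i ∈ G, ∀ j ∈ G, parity (ζ i) = parity (ζ j) → i = j := by
    intro i hi j hj hij
    by_contra hne'
    obtain ⟨m, hmZ, hm⟩ := exists_midpoint_of_parity_eq (hζZ i hi) (hζZ j hj) hij
    have hmid : ∀ a, φ a (ζ i) + φ a (ζ j) = 2 * φ a m := by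
      intro a
      have : intVec (ζ i) - p + (intVec (ζ j) - p) = (2 : ℝ) • (intVec m - p) := by
        rw [smul_sub, ← hm, two_smul]; abel
      simp only [φ]
      rw [← dotProduct_add, this, dotProduct_smul, smul_eq_mul]
    obtain ⟨k, hk, hk1⟩ := hGZ m hmZ
    have hmk := hmid (f k)
    by_cases hki : k = i
    · subst hki
      have h1 := hζmin k hk m hmZ hk1
      have h2 := hζpriv j hj k hk hne'
      linarith
    · by_cases hkj : k = j
      · subst hkj
        have h1 := hζmin k hk m hmZ hk1
        have h2 := hζpriv i hi k hk hki
        linarith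
      · have h1 := hζpriv i hi k hk hki
        have h2 := hζpriv j hj k hk hkj
        linarith
  refine ⟨fun σ => if h : ∃ i ∈ G, parity (ζ i) = σ then f h.choose else 0, fun σ => ?_,
    fun z hz => ?_⟩
  · dsimp only
    split_ifs with h
    · exact hGA _ h.choose_spec.1
    · intro x _
      simp
  · obtain ⟨i, hi, h1⟩ := hGZ z hz
    have h : ∃ j ∈ G, parity (ζ j) = parity (ζ i) := ⟨i, hi, rfl⟩
    refine ⟨parity (ζ i), ?_⟩
    beta_reduce
    rw [dif_pos h, hinj _ h.choose_spec.1 i hi h.choose_spec.2]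
    exact h1

/-- If every integer point is cut off by the polar, then `2 ^ d` elements of it suffice. -/
theorem exists_parity_cover_lattice {d : ℕ} {p : Fin d → ℝ} {K : Set (Fin d → ℝ)}
    (hp : p ∈ interior K)
    (hcut : ∀ z : Fin d → ℤ, ∃ a ∈ polarAt p K, 1 ≤ a ⬝ᵥ (intVec z - p)) :
    ∃ F : (Fin d → ZMod 2) → Fin d → ℝ, (∀ σ, F σ ∈ polarAt p K) ∧
      ∀ z : Fin d → ℤ, ∃ σ, 1 ≤ F σ ⬝ᵥ (intVec z - p) := by
  classical
  let C : Set ((Fin d → ZMod 2) → Fin d → ℝ) := Set.univ.pi fun _ => polarAt p K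
  have hC : IsCompact C := isCompact_univ_pi fun _ => isCompact_polarAt hp
  let D : (Fin d → ℤ) → Set ((Fin d → ZMod 2) → Fin d → ℝ) := fun z =>
    ⋃ σ, {F | 1 ≤ F σ ⬝ᵥ (intVec z - p)}
  have hD : ∀ z, IsClosed (D z) := fun z => isClosed_iUnion_of_finite fun σ =>
    isClosed_le continuous_const ((continuous_apply σ).dotProduct continuous_const)
  obtain ⟨F, hFC, hFD⟩ := hC.inter_iInter_nonempty D hD (by
    intro u
    let b : Fin d → ℤ := fun i => ∑ z ∈ u, |z i|
    obtain ⟨F, hF, hFz⟩ := exists_parity_cover b fun z _ => hcut z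
    refine ⟨F, fun σ _ => hF σ, Set.mem_iInter₂.2 fun z hz => ?_⟩
    have hzb : ∀ i, |z i| ≤ b i := fun i =>
      Finset.single_le_sum (f := fun z : Fin d → ℤ => |z i|) (fun _ _ => abs_nonneg _) hz
    obtain ⟨σ, hσ⟩ := hFz z (Finset.mem_Icc.2
      ⟨fun i => (abs_le.1 (hzb i)).1, fun i => (abs_le.1 (hzb i)).2⟩)
    exact Set.mem_iUnion.2 ⟨σ, hσ⟩)
  exact ⟨F, fun σ => hFC σ trivial, fun z => Set.mem_iUnion.1 (Set.mem_iInter.1 hFD z)⟩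

theorem interior_setOf_mulVec_le {d : ℕ} {ι : Type*} [Finite ι] (a : Matrix ι (Fin d) ℝ)
    (p : Fin d → ℝ) {c : ι → ℝ} (hc : ∀ σ, 0 < c σ) :
    interior {x | ∀ σ, a.mulVec (x - p) σ ≤ c σ} = {x | ∀ σ, a.mulVec (x - p) σ < c σ} := by
  have hcont : ∀ σ, Continuous fun x => a.mulVec (x - p) σ := fun σ =>
    (continuous_const.dotProduct (continuous_id.sub continuous_const) :
      Continuous fun x => a σ ⬝ᵥ (x - p))
  apply subset_antisymm
  · intro x hx σ
    have hlim : Filter.Tendsto (fun η : ℝ => x + η • (x - p)) (nhdsWithin 0 (Set.Ioi 0))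
        (nhds x) := by
      have : Continuous fun η : ℝ => x + η • (x - p) := by fun_prop
      have h := this.tendsto 0
      simp only [zero_smul, add_zero] at h
      exact h.mono_left nhdsWithin_le_nhds
    obtain ⟨η, hη, hη0⟩ := ((hlim.eventually (mem_interior_iff_mem_nhds.1 hx)).and
      self_mem_nhdsWithin).exists
    have h1 := hη σ
    have h2 : x + η • (x - p) - p = (1 + η) • (x - p) := by
      rw [add_smul, one_smul]; abel
    rw [h2, Matrix.mulVec_smul, Pi.smul_apply, smul_eq_mul] at h1
    have h3 : (0 : ℝ) < η := hη0
    have h4 := hc σ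
    by_contra hcon
    push Not at hcon
    nlinarith
  · refine interior_maximal (fun x hx σ => (hx σ).le) ?_
    rw [Set.ofPred_forall]
    exact isOpen_iInter_of_finite fun σ => isOpen_lt (hcont σ) continuous_const

theorem isPolyhedron_setOf_mulVec_le {d : ℕ} {ι : Type*} [Fintype ι] (a : Matrix ι (Fin d) ℝ)
    (p : Fin d → ℝ) (c : ι → ℝ) : IsPolyhedron d {x | ∀ σ, a.mulVec (x - p) σ ≤ c σ} := by
  let e := Fintype.equivFin ι
  refine ⟨Fintype.card ι, fun i => a (e.symm i), fun i => c (e.symm i) + a.mulVec p (e.symm i), ?_⟩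
  ext x
  simp only [Set.mem_ofPred_eq, Matrix.mulVec_sub, Pi.sub_apply, sub_le_iff_le_add]
  exact e.symm.forall_congr_right.symm

theorem isClosed_setOf_mulVec_le {d : ℕ} {ι : Type*} (a : Matrix ι (Fin d) ℝ)
    (p : Fin d → ℝ) (c : ι → ℝ) : IsClosed {x | ∀ σ, a.mulVec (x - p) σ ≤ c σ} := by
  rw [Set.ofPred_forall]
  exact isClosed_iInter fun σ => isClosed_le
    (continuous_const.dotProduct (continuous_id.sub continuous_const) :
      Continuous fun x => a σ ⬝ᵥ (x - p)) continuous_const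

theorem convex_setOf_mulVec_le {d : ℕ} {ι : Type*} (a : Matrix ι (Fin d) ℝ)
    (p : Fin d → ℝ) (c : ι → ℝ) : Convex ℝ {x | ∀ σ, a.mulVec (x - p) σ ≤ c σ} := by
  intro x hx y hy s t hs ht hst σ
  have h : s • x + t • y - p = s • (x - p) + t • (y - p) := by
    have : p = (s + t) • p := by rw [hst, one_smul]
    conv_lhs => rw [this]
    simp only [smul_sub, add_smul]; abel
  rw [h, Matrix.mulVec_add, Matrix.mulVec_smul, Matrix.mulVec_smul]
  simp only [Pi.add_apply, Pi.smul_apply, smul_eq_mul]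
  calc _ ≤ s * c σ + t * c σ :=
        add_le_add (mul_le_mul_of_nonneg_left (hx σ) hs) (mul_le_mul_of_nonneg_left (hy σ) ht)
    _ = c σ := by rw [← add_mul, hst, one_mul]

/-- A full-dimensional maximal lattice-free set is cut out by `2 ^ d` inequalities. -/
theorem IsMaxLatticeFree.exists_eq_setOf_mulVec_le {d : ℕ} {K : Set (Fin d → ℝ)}
    (hK : IsMaxLatticeFree d K) {p : Fin d → ℝ} (hp : p ∈ interior K) :
    ∃ a : Matrix (Fin d → ZMod 2) (Fin d) ℝ, K = {x | ∀ σ, a.mulVec (x - p) σ ≤ 1} := by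
  have hcut : ∀ z : Fin d → ℤ, ∃ a ∈ polarAt p K, 1 ≤ a ⬝ᵥ (intVec z - p) := fun z =>
    exists_mem_polarAt_one_le hK.1.2.1 hp fun hz =>
      (Set.eq_empty_iff_forall_notMem.1 hK.1.2.2 (intVec z)) ⟨hz, z, rfl⟩
  obtain ⟨a, ha, hz⟩ := exists_parity_cover_lattice hp hcut
  refine ⟨a, (hK.2 _ ⟨isClosed_setOf_mulVec_le a p _, convex_setOf_mulVec_le a p _, ?_⟩
    fun x hx σ => ha σ x hx).symm⟩
  rw [interior_setOf_mulVec_le (c := fun _ => (1 : ℝ)) a p fun _ => one_pos,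
    Set.eq_empty_iff_forall_notMem]
  rintro _ ⟨hx, z, rfl⟩
  obtain ⟨σ, hσ⟩ := hz z
  exact absurd (hx σ) (not_lt.2 hσ)

theorem add_mem_intLattice {d : ℕ} {x y : Fin d → ℝ} (hx : x ∈ intLattice d)
    (hy : y ∈ intLattice d) : x + y ∈ intLattice d := by
  obtain ⟨z, rfl⟩ := hx
  obtain ⟨w, rfl⟩ := hy
  exact ⟨z + w, by ext i; simp⟩

theorem zsmul_mem_intLattice {d : ℕ} {x : Fin d → ℝ} (n : ℤ) (hx : x ∈ intLattice d) :
    (n : ℝ) • x ∈ intLattice d := by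
  obtain ⟨z, rfl⟩ := hx
  exact ⟨n • z, by ext i; simp⟩

theorem sub_mem_intLattice {d : ℕ} {x y : Fin d → ℝ} (hx : x ∈ intLattice d)
    (hy : y ∈ intLattice d) : x - y ∈ intLattice d := by
  obtain ⟨z, rfl⟩ := hx
  obtain ⟨w, rfl⟩ := hy
  exact ⟨z - w, by ext i; simp⟩

/-- Dirichlet approximation: arbitrarily long multiples of `r` come arbitrarily close to the
lattice. -/
theorem exists_mem_intLattice_norm_sub_smul_lt {d : ℕ} (r : Fin d → ℝ) (M : ℝ) {δ : ℝ}
    (hδ : 0 < δ) : ∃ u ∈ intLattice d, ∃ t ≥ M, ‖u - t • r‖ < δ := by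
  let x : ℕ → Fin d → ℝ := fun n i => Int.fract (n * |M| * r i)
  have hx : ∀ n, x n ∈ Set.Icc (0 : Fin d → ℝ) 1 := fun n =>
    ⟨fun i => Int.fract_nonneg _, fun i => (Int.fract_lt_one _).le⟩
  obtain ⟨w, -, φ, hφ, hlim⟩ := isCompact_Icc.tendsto_subseq hx
  obtain ⟨N, hN⟩ := Metric.cauchySeq_iff.1 hlim.cauchySeq δ hδ
  have hdist := hN N le_rfl (N + 1) N.le_succ
  have hlt : φ N + 1 ≤ φ (N + 1) := hφ N.lt_succ_self
  refine ⟨_, ⟨fun i => ⌊φ (N + 1) * |M| * r i⌋ - ⌊φ N * |M| * r i⌋, rfl⟩,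
    ((φ (N + 1) : ℝ) - φ N) * |M|, ?_, ?_⟩
  · have h1 : (1 : ℝ) ≤ (φ (N + 1) : ℝ) - φ N := by
      have : ((φ N + 1 : ℕ) : ℝ) ≤ φ (N + 1) := by exact_mod_cast hlt
      push_cast at this
      linarith
    nlinarith [le_abs_self M, abs_nonneg M]
  · rw [dist_eq_norm] at hdist
    refine lt_of_eq_of_lt (congrArg norm ?_) hdist
    ext i
    simp only [Pi.sub_apply, Pi.smul_apply, smul_eq_mul, Function.comp, x, Int.fract]
    push_cast
    ring

section Polyhedral

variable {d : ℕ} {ι : Type*} [Fintype ι] {a : Matrix ι (Fin d) ℝ}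

/-- Normalised nonzero vectors of the range of `a` subconverge inside the range. -/
theorem exists_subseq_tendsto_normalize_mulVec (x : ℕ → Fin d → ℝ)
    (hx : ∀ n, a.mulVec (x n) ≠ 0) :
    ∃ (v : Fin d → ℝ) (φ : ℕ → ℕ), StrictMono φ ∧ ‖a.mulVec v‖ = 1 ∧
      Filter.Tendsto (fun n => ‖a.mulVec (x (φ n))‖⁻¹ • a.mulVec (x (φ n))) Filter.atTop
        (nhds (a.mulVec v)) := by
  have hcomp : IsCompact (Metric.sphere (0 : ι → ℝ) 1 ∩
      (LinearMap.range a.mulVecLin : Set (ι → ℝ))) :=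
    (isCompact_sphere _ _).inter_right (Submodule.closed_of_finiteDimensional _)
  obtain ⟨w, ⟨hw, ⟨v, hv⟩⟩, φ, hφ, hlim⟩ := hcomp.tendsto_subseq
    (x := fun n => ‖a.mulVec (x n)‖⁻¹ • a.mulVec (x n)) (fun n => by
      refine ⟨?_, Submodule.smul_mem _ _ ⟨x n, rfl⟩⟩
      rw [mem_sphere_zero_iff_norm, norm_smul, norm_inv, norm_norm,
        inv_mul_cancel₀ (norm_ne_zero_iff.2 (hx n))])
  rw [Matrix.mulVecLin_apply] at hv
  subst hv
  exact ⟨v, φ, hφ, mem_sphere_zero_iff_norm.1 hw, hlim⟩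

variable {K : Set (Fin d → ℝ)} {p : Fin d → ℝ}

/-- Directions that are approximated by lattice vectors lie in the lineality space. -/
theorem IsMaxLatticeFree.mulVec_eq_zero_of_approx (hK : IsMaxLatticeFree d K)
    (hKa : K = {x | ∀ σ, a.mulVec (x - p) σ ≤ 1}) {v : Fin d → ℝ}
    (hv : ∀ c : ℝ, ∀ ε > 0, ∃ u ∈ intLattice d, ∀ σ,
      a.mulVec u σ < c * a.mulVec v σ + ε) : a.mulVec v = 0 := by
  have hint : interior K = {x | ∀ σ, a.mulVec (x - p) σ < 1} := by
    rw [hKa]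
    exact interior_setOf_mulVec_le (c := fun _ => (1 : ℝ)) a p fun _ => one_pos
  have hp : p ∈ interior K := by
    rw [hint]; intro σ; simp
  let U : Set (Fin d → ℝ) := {x | ∃ c : ℝ, x + c • v ∈ interior K}
  have hUopen : IsOpen U := by
    have : U = ⋃ c : ℝ, (fun x => x + c • v) ⁻¹' interior K := by
      ext x; simp [U]
    rw [this]
    exact isOpen_iUnion fun c => isOpen_interior.preimage (by fun_prop)
  have hUconv : Convex ℝ U := by
    rintro x ⟨c, hx⟩ y ⟨e, hy⟩ s t hs ht hst
    refine ⟨s * c + t * e, ?_⟩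
    convert hK.1.2.1.interior hx hy hs ht hst using 1
    simp only [smul_add, add_smul, smul_smul]; abel
  have hKU : interior K ⊆ U := fun x hx => ⟨0, by simpa using hx⟩
  have hfree : IsLatticeFree d (closure U) := by
    refine ⟨isClosed_closure, hUconv.closure, ?_⟩
    rw [hUconv.interior_closure_eq_interior_of_nonempty_interior
      (by rw [hUopen.interior_eq]; exact ⟨p, hKU hp⟩), hUopen.interior_eq,
      Set.eq_empty_iff_forall_notMem]
    rintro z ⟨⟨c, hc⟩, hz⟩
    rw [hint] at hc
    obtain ⟨ε, hε, hcε⟩ : ∃ ε > 0, ∀ σ, a.mulVec (z + c • v - p) σ + ε ≤ 1 := by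
      obtain hι | hι := isEmpty_or_nonempty ι
      · exact ⟨1, one_pos, fun σ => hι.elim σ⟩
      · obtain ⟨τ, hτ⟩ := Finite.exists_max fun σ => a.mulVec (z + c • v - p) σ
        exact ⟨1 - a.mulVec (z + c • v - p) τ, sub_pos.2 (hc τ), fun σ => by linarith [hτ σ]⟩
    obtain ⟨u, hu, huσ⟩ := hv c ε hε
    refine Set.eq_empty_iff_forall_notMem.1 hK.1.2.2 (z + u) ⟨?_, add_mem_intLattice hz hu⟩
    rw [hint]
    intro σ
    have h1 := hcε σ
    have h2 := huσ σ
    simp only [Matrix.mulVec_sub, Matrix.mulVec_add, Matrix.mulVec_smul, Pi.add_apply,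
      Pi.sub_apply, Pi.smul_apply, smul_eq_mul] at h1 h2 ⊢
    linarith
  have hUK : closure U = K := by
    refine hK.2 _ hfree fun x hx => closure_mono hKU ?_
    rw [hK.1.2.1.closure_interior_eq_closure_of_nonempty_interior ⟨p, hp⟩]
    exact subset_closure hx
  have hline : ∀ c : ℝ, ∀ σ, c * a.mulVec v σ ≤ 1 := by
    intro c σ
    have hmem : p + c • v ∈ K := by
      rw [← hUK]
      exact subset_closure ⟨-c, by simpa using hp⟩
    rw [hKa] at hmem
    have := hmem σ
    rwa [add_sub_cancel_left, Matrix.mulVec_smul, Pi.smul_apply, smul_eq_mul] at this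
  ext σ
  by_contra hne
  have := hline (2 * (a.mulVec v σ)⁻¹) σ
  rw [mul_assoc, inv_mul_cancel₀ hne] at this
  norm_num at this

theorem exists_delta_norm_mulVec_lt (a : Matrix ι (Fin d) ℝ) {ε : ℝ} (hε : 0 < ε) :
    ∃ δ > 0, ∀ x : Fin d → ℝ, ‖x‖ < δ → ‖a.mulVec x‖ < ε := by
  have hcont : Continuous a.mulVecLin := LinearMap.continuous_of_finiteDimensional _
  obtain ⟨δ, hδ, h⟩ := Metric.continuous_iff.1 hcont 0 ε hε
  exact ⟨δ, hδ, fun x hx => by simpa using h x (by simpa using hx)⟩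

/-- The recession cone of a maximal lattice-free polyhedron is a linear subspace. -/
theorem IsMaxLatticeFree.mulVec_eq_zero_of_nonpos (hK : IsMaxLatticeFree d K)
    (hKa : K = {x | ∀ σ, a.mulVec (x - p) σ ≤ 1}) {r : Fin d → ℝ}
    (hr : ∀ σ, a.mulVec r σ ≤ 0) : a.mulVec r = 0 := by
  refine hK.mulVec_eq_zero_of_approx hKa fun c ε hε => ?_
  obtain ⟨δ, hδ, hδε⟩ := exists_delta_norm_mulVec_lt a hε
  obtain ⟨u, hu, t, ht, hut⟩ := exists_mem_intLattice_norm_sub_smul_lt r c hδ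
  refine ⟨u, hu, fun σ => ?_⟩
  have h1 := (le_abs_self _).trans_lt ((norm_le_pi_norm _ σ).trans_lt (hδε _ hut))
  rw [Matrix.mulVec_sub, Matrix.mulVec_smul, Pi.sub_apply, Pi.smul_apply, smul_eq_mul] at h1
  nlinarith [hr σ]

theorem IsMaxLatticeFree.exists_norm_mulVec_le (hK : IsMaxLatticeFree d K)
    (hKa : K = {x | ∀ σ, a.mulVec (x - p) σ ≤ 1}) (B : ℝ) :
    ∃ C, ∀ x, (∀ σ, a.mulVec x σ ≤ B) → ‖a.mulVec x‖ ≤ C := by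
  by_contra hcon
  push Not at hcon
  choose x hxB hx using fun n : ℕ => hcon n
  have hpos : ∀ n, 0 < ‖a.mulVec (x n)‖ := fun n => (Nat.cast_nonneg n).trans_lt (hx n)
  obtain ⟨v, φ, hφ, hv, hlim⟩ :=
    exists_subseq_tendsto_normalize_mulVec x fun n => norm_pos_iff.1 (hpos n)
  have htop : Filter.Tendsto (fun n => ‖a.mulVec (x (φ n))‖) Filter.atTop Filter.atTop :=
    (Filter.tendsto_atTop_mono (fun n => (hx n).le) tendsto_natCast_atTop_atTop).comp
      hφ.tendsto_atTop
  have hzero : Filter.Tendsto (fun n => ‖a.mulVec (x (φ n))‖⁻¹ * B) Filter.atTop (nhds 0) := by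
    simpa using htop.inv_tendsto_atTop.mul_const B
  have hnonpos : ∀ σ, a.mulVec v σ ≤ 0 := fun σ =>
    le_of_tendsto_of_tendsto' (tendsto_pi_nhds.1 hlim σ) hzero fun n => by
      rw [Pi.smul_apply, smul_eq_mul]
      exact mul_le_mul_of_nonneg_left (hxB _ σ) (inv_nonneg.2 (norm_nonneg _))
  rw [hK.mulVec_eq_zero_of_nonpos hKa hnonpos, norm_zero] at hv
  exact zero_ne_one hv

/-- Modulo the lineality space, the lattice is discrete. -/
theorem IsMaxLatticeFree.exists_mulVec_eq_zero_of_norm_lt (hK : IsMaxLatticeFree d K)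
    (hKa : K = {x | ∀ σ, a.mulVec (x - p) σ ≤ 1}) :
    ∃ ε > 0, ∀ u ∈ intLattice d, ‖a.mulVec u‖ < ε → a.mulVec u = 0 := by
  by_contra hcon
  push Not at hcon
  choose u hu hulim hu0 using fun n : ℕ => hcon (1 / ((n : ℝ) + 1)) (by positivity)
  obtain ⟨v, φ, hφ, hv, hlim⟩ := exists_subseq_tendsto_normalize_mulVec u hu0
  have hsmall : Filter.Tendsto (fun n => ‖a.mulVec (u (φ n))‖) Filter.atTop (nhds 0) :=
    (squeeze_zero (fun n => norm_nonneg _) (fun n => (hulim n).le)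
      tendsto_one_div_add_atTop_nhds_zero_nat).comp hφ.tendsto_atTop
  suffices a.mulVec v = 0 by
    rw [this, norm_zero] at hv
    exact zero_ne_one hv
  refine hK.mulVec_eq_zero_of_approx hKa fun c ε hε => ?_
  have hlim' : Filter.Tendsto (fun n => |c| * ‖‖a.mulVec (u (φ n))‖⁻¹ • a.mulVec (u (φ n)) -
      a.mulVec v‖) Filter.atTop (nhds 0) := by
    simpa using (tendsto_iff_norm_sub_tendsto_zero.1 hlim).const_mul |c|
  obtain ⟨n, hn1, hn2⟩ := ((hsmall.eventually_lt_const (half_pos hε)).and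
    (hlim'.eventually_lt_const (half_pos hε))).exists
  set y := a.mulVec (u (φ n)) with hy
  have hypos : 0 < ‖y‖ := norm_pos_iff.2 (hu0 _)
  refine ⟨_, zsmul_mem_intLattice ⌊c / ‖y‖⌋ (hu (φ n)), fun σ => ?_⟩
  rw [Matrix.mulVec_smul, ← hy, Pi.smul_apply, smul_eq_mul]
  have h1 : |(‖y‖⁻¹ * y σ - a.mulVec v σ)| ≤ ‖‖y‖⁻¹ • y - a.mulVec v‖ :=
    norm_le_pi_norm (‖y‖⁻¹ • y - a.mulVec v) σ
  have h2 : c * (‖y‖⁻¹ * y σ - a.mulVec v σ) ≤ |c| * ‖‖y‖⁻¹ • y - a.mulVec v‖ := by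
    refine (le_abs_self _).trans ?_
    rw [abs_mul]
    exact mul_le_mul_of_nonneg_left h1 (abs_nonneg c)
  have h3 : |y σ| ≤ ‖y‖ := norm_le_pi_norm y σ
  have h4 : -(Int.fract (c / ‖y‖) * y σ) ≤ ‖y‖ := by
    refine (neg_le_abs _).trans ?_
    rw [abs_mul, abs_of_nonneg (Int.fract_nonneg _)]
    nlinarith [Int.fract_nonneg (c / ‖y‖), Int.fract_lt_one (c / ‖y‖), abs_nonneg (y σ)]
  have h5 : (⌊c / ‖y‖⌋ : ℝ) * y σ = c * (‖y‖⁻¹ * y σ) - Int.fract (c / ‖y‖) * y σ := by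
    rw [Int.fract]; ring
  rw [h5]
  linarith

/-- Integer points slightly beyond the facet hyperplane of `τ` keep a positive distance to it. -/
theorem IsMaxLatticeFree.exists_gap (hK : IsMaxLatticeFree d K)
    (hKa : K = {x | ∀ σ, a.mulVec (x - p) σ ≤ 1}) (τ : ι) :
    ∃ ε > 0, ε ≤ 1 ∧ ∀ z ∈ intLattice d, (∀ σ, a.mulVec (z - p) σ ≤ 2) →
      a.mulVec (z - p) τ < 1 + ε → a.mulVec (z - p) τ ≤ 1 := by
  by_contra hcon
  push Not at hcon
  choose z hz hz2 hzlim hz1 using fun n : ℕ => hcon (1 / ((n : ℝ) + 1)) (by positivity)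
    (by rw [div_le_one (by positivity)]; linarith [(Nat.cast_nonneg n : (0 : ℝ) ≤ n)])
  obtain ⟨C, hC⟩ := hK.exists_norm_mulVec_le hKa 2
  obtain ⟨ε, hε, hdisc⟩ := hK.exists_mulVec_eq_zero_of_norm_lt hKa
  have hbdd : ∀ n, a.mulVec (z n - p) ∈ Metric.closedBall (0 : ι → ℝ) C := fun n =>
    mem_closedBall_zero_iff.2 (hC _ (hz2 n))
  obtain ⟨w, -, φ, hφ, hlim⟩ := (isCompact_closedBall (0 : ι → ℝ) C).tendsto_subseq hbdd
  obtain ⟨N, hN⟩ := Metric.cauchySeq_iff.1 hlim.cauchySeq ε hε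
  have hconst : ∀ n ≥ N, a.mulVec (z (φ n) - p) = a.mulVec (z (φ N) - p) := by
    intro n hn
    have h1 := hN n hn N le_rfl
    simp only [Function.comp, dist_eq_norm, ← Matrix.mulVec_sub, sub_sub_sub_cancel_right] at h1
    have h2 := hdisc _ (sub_mem_intLattice (hz _) (hz _)) h1
    rw [← sub_eq_zero, ← Matrix.mulVec_sub, sub_sub_sub_cancel_right, h2]
  have hτ : Filter.Tendsto (fun n => 1 + 1 / ((φ n : ℝ) + 1)) Filter.atTop (nhds 1) := by
    simpa using ((tendsto_one_div_add_atTop_nhds_zero_nat (𝕜 := ℝ)).comp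
      hφ.tendsto_atTop).const_add 1
  have hle : a.mulVec (z (φ N) - p) τ ≤ 1 := ge_of_tendsto hτ <| by
    filter_upwards [Filter.eventually_ge_atTop N] with n hn
    rw [← hconst n hn]
    exact (hzlim (φ n)).le
  exact absurd (hz1 (φ N)) (not_lt.2 hle)

end Polyhedral

theorem mem_intrinsicInterior_iff_mem_nhdsWithin {d : ℕ} {s : Set (Fin d → ℝ)} {x : Fin d → ℝ} :
    x ∈ intrinsicInterior ℝ s ↔
      x ∈ affineSpan ℝ s ∧ s ∈ nhdsWithin x (affineSpan ℝ s : Set (Fin d → ℝ)) := by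
  rw [mem_intrinsicInterior]
  constructor
  · rintro ⟨y, hy, rfl⟩
    exact ⟨y.2, preimage_coe_mem_nhds_subtype.1 (mem_interior_iff_mem_nhds.1 hy)⟩
  · rintro ⟨hx, hs⟩
    exact ⟨⟨x, hx⟩, mem_interior_iff_mem_nhds.2 (preimage_coe_mem_nhds_subtype.2 hs), rfl⟩

theorem exists_mem_openSegment_of_mem_nhdsWithin {d : ℕ} {s : Set (Fin d → ℝ)}
    {A : AffineSubspace ℝ (Fin d → ℝ)} {q x : Fin d → ℝ} (hq : q ∈ A)
    (hs : s ∈ nhdsWithin q (A : Set (Fin d → ℝ))) (hx : x ∈ A) :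
    ∃ y ∈ s, q ∈ openSegment ℝ x y := by
  have hcont : Continuous fun η : ℝ => AffineMap.lineMap x q η :=
    AffineMap.lineMap_continuous
  have hlim : Filter.Tendsto (fun η : ℝ => AffineMap.lineMap x q η) (nhdsWithin 1 (Set.Ioi 1))
      (nhdsWithin q (A : Set (Fin d → ℝ))) := by
    refine tendsto_nhdsWithin_iff.2 ⟨?_, Filter.Eventually.of_forall fun η =>
      AffineMap.lineMap_mem η hx hq⟩
    have h := hcont.tendsto 1
    simp only [AffineMap.lineMap_apply_one] at h
    exact h.mono_left nhdsWithin_le_nhds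
  obtain ⟨η, hη, hη1⟩ := ((hlim.eventually hs).and self_mem_nhdsWithin).exists
  have hη1' : (1 : ℝ) < η := hη1
  have hη0 : 0 < η := by linarith
  refine ⟨_, hη, 1 - η⁻¹, η⁻¹, sub_pos.2 (inv_lt_one_of_one_lt₀ hη1'), inv_pos.2 hη0, by ring, ?_⟩
  ext i
  simp only [AffineMap.lineMap_apply, vsub_eq_sub, vadd_eq_add, Pi.add_apply, Pi.smul_apply,
    Pi.sub_apply, smul_eq_mul]
  field_simp
  ring

/-- A linear inequality valid on `F` and tight at a relative interior point is tight on `F`. -/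
theorem eq_of_mem_intrinsicInterior {d : ℕ} {F : Set (Fin d → ℝ)} {q : Fin d → ℝ}
    (hq : q ∈ intrinsicInterior ℝ F) (f : (Fin d → ℝ) →ₗ[ℝ] ℝ) {c : ℝ}
    (hf : ∀ x ∈ F, f x ≤ c) (hfq : f q = c) : ∀ x ∈ F, f x = c := by
  intro x hx
  obtain ⟨hqA, hqF⟩ := mem_intrinsicInterior_iff_mem_nhdsWithin.1 hq
  obtain ⟨y, hy, s, t, hs, ht, hst, rfl⟩ :=
    exists_mem_openSegment_of_mem_nhdsWithin hqA hqF (subset_affineSpan ℝ F hx)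
  rw [map_add, map_smul, map_smul, smul_eq_mul, smul_eq_mul] at hfq
  refine le_antisymm (hf x hx) ?_
  have h2 := hf y hy
  have h3 : s * c + t * c = c := by rw [← add_mul, hst, one_mul]
  by_contra hcon
  push Not at hcon
  nlinarith

theorem IsFacet.notMem_interior {d : ℕ} {K F : Set (Fin d → ℝ)} (hF : IsFacet d K F)
    (hdim : affineSpan ℝ K = ⊤) {q : Fin d → ℝ} (hq : q ∈ F) : q ∉ interior K := by
  intro hqK
  obtain ⟨-, hext, -, hrank⟩ := hF
  have hKF : K ⊆ F := by
    intro x hx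
    obtain ⟨y, hy, hqy⟩ := exists_mem_openSegment_of_mem_nhdsWithin (A := ⊤)
      (AffineSubspace.mem_top ℝ _ q)
      (mem_nhdsWithin_of_mem_nhds (mem_interior_iff_mem_nhds.1 hqK))
      (AffineSubspace.mem_top ℝ _ x)
    exact hext.left_mem_of_mem_openSegment hx hy hq hqy
  have htop : affineSpan ℝ F = ⊤ := top_le_iff.1 (hdim ▸ affineSpan_mono ℝ hKF)
  rw [htop, AffineSubspace.direction_top, finrank_top, Module.finrank_fin_fun] at hrank
  omega

/-- The direction of a facet contained in a hyperplane is the kernel of the functional. -/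
theorem IsFacet.direction_eq_ker {d : ℕ} {K F : Set (Fin d → ℝ)} (hF : IsFacet d K F)
    {f : (Fin d → ℝ) →ₗ[ℝ] ℝ} (hf : f ≠ 0) {c : ℝ} (hfc : ∀ x ∈ F, f x = c) :
    (affineSpan ℝ F).direction = LinearMap.ker f := by
  refine Submodule.eq_of_le_of_finrank_eq ?_ ?_
  · rw [direction_affineSpan, vectorSpan_def, Submodule.span_le]
    rintro _ ⟨x, hx, y, hy, rfl⟩
    simp [hfc x hx, hfc y hy]
  · have h1 := Module.Dual.finrank_ker_add_one_of_ne_zero (f := f) hf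
    rw [Module.finrank_fin_fun] at h1
    have := hF.2.2.2
    omega

theorem IsFacet.mem_affineSpan {d : ℕ} {K F : Set (Fin d → ℝ)} (hF : IsFacet d K F)
    {f : (Fin d → ℝ) →ₗ[ℝ] ℝ} (hf : f ≠ 0) {c : ℝ} (hfc : ∀ x ∈ F, f x = c)
    {x : Fin d → ℝ} (hx : f x = c) : x ∈ affineSpan ℝ F := by
  obtain ⟨y, hy⟩ := hF.1
  have : x -ᵥ y ∈ (affineSpan ℝ F).direction := by
    rw [hF.direction_eq_ker hf hfc, LinearMap.mem_ker, vsub_eq_sub, map_sub, hx, hfc y hy, sub_self]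
  simpa using AffineSubspace.vadd_mem_of_mem_direction this (subset_affineSpan ℝ F hy)

theorem IsMaxLatticeFree.intrinsicInterior_facet_inter_nonempty {d : ℕ} {ι : Type*} [Fintype ι]
    {a : Matrix ι (Fin d) ℝ} {K F : Set (Fin d → ℝ)} {p : Fin d → ℝ} (hK : IsMaxLatticeFree d K)
    (hdim : affineSpan ℝ K = ⊤) (hKa : K = {x | ∀ σ, a.mulVec (x - p) σ ≤ 1})
    (hF : IsFacet d K F) : (intrinsicInterior ℝ F ∩ intLattice d).Nonempty := by
  classical
  have hint : interior K = {x | ∀ σ, a.mulVec (x - p) σ < 1} := by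
    rw [hKa]
    exact interior_setOf_mulVec_le (c := fun _ => (1 : ℝ)) a p fun _ => one_pos
  obtain ⟨q, hq⟩ := hF.1.intrinsicInterior hF.2.2.1
  have hqF : q ∈ F := intrinsicInterior_subset hq
  have hFK : F ⊆ K := hF.2.1.subset
  have hle : ∀ x ∈ K, ∀ σ, a.mulVec (x - p) σ ≤ 1 := fun x hx => by rwa [hKa] at hx
  let f : ι → (Fin d → ℝ) →ₗ[ℝ] ℝ := fun σ => LinearMap.proj σ ∘ₗ a.mulVecLin
  have hf : ∀ σ x, f σ x = a.mulVec x σ := fun σ x => rfl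
  have hiff : ∀ σ x, a.mulVec (x - p) σ = 1 ↔ f σ x = 1 + f σ p := fun σ x => by
    rw [Matrix.mulVec_sub, Pi.sub_apply, hf, hf, sub_eq_iff_eq_add]
  have htight : ∀ σ, a.mulVec (q - p) σ = 1 → ∀ x ∈ F, f σ x = 1 + f σ p := fun σ hσ =>
    eq_of_mem_intrinsicInterior hq (f σ) (fun x hx => by
      have := hle x (hFK hx) σ
      rw [Matrix.mulVec_sub, Pi.sub_apply] at this
      rw [hf, hf]
      linarith) ((hiff σ q).1 hσ)
  obtain ⟨τ, hτ⟩ : ∃ τ, a.mulVec (q - p) τ = 1 := by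
    by_contra hcon
    push Not at hcon
    refine hF.notMem_interior hdim hqF ?_
    rw [hint]
    exact fun σ => lt_of_le_of_ne (hle q (hFK hqF) σ) (hcon σ)
  have hfτ : f τ ≠ 0 := fun h => by
    have h1 : f τ (q - p) = 1 := hτ
    rw [h, LinearMap.zero_apply] at h1
    exact zero_ne_one h1
  -- the inequalities active at `q` all coincide with that of `τ`
  have hactive : ∀ σ, a.mulVec (q - p) σ = 1 → ∀ x, a.mulVec x σ = a.mulVec x τ := by
    intro σ hσ x
    have hker : x - f τ x • (q - p) ∈ LinearMap.ker (f σ) := by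
      have hfσ : f σ ≠ 0 := fun h => by
        have h1 : f σ (q - p) = 1 := hσ
        rw [h, LinearMap.zero_apply] at h1
        exact zero_ne_one h1
      rw [← hF.direction_eq_ker hfσ (htight σ hσ), hF.direction_eq_ker hfτ (htight τ hτ),
        LinearMap.mem_ker, map_sub, map_smul, hf τ (q - p), hτ, smul_eq_mul, mul_one, sub_self]
    rw [LinearMap.mem_ker, map_sub, map_smul, hf σ (q - p), hσ, smul_eq_mul, mul_one,
      sub_eq_zero] at hker
    exact hker
  obtain ⟨hqA, hqn⟩ := mem_intrinsicInterior_iff_mem_nhdsWithin.1 hq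
  -- points of `K` on the hyperplane belong to the facet
  have hface : ∀ x ∈ K, a.mulVec (x - p) τ = 1 → x ∈ F := by
    intro x hx hxτ
    obtain ⟨y, hy, hqy⟩ := exists_mem_openSegment_of_mem_nhdsWithin hqA hqn
      (hF.mem_affineSpan hfτ (htight τ hτ) ((hiff τ x).1 hxτ))
    exact hF.2.1.left_mem_of_mem_openSegment hx (hFK hy) hqF hqy
  have hspan : ∀ x ∈ affineSpan ℝ F, a.mulVec (x - p) τ = 1 := by
    intro x hx
    have h1 := AffineSubspace.vsub_mem_direction hx hqA
    rw [hF.direction_eq_ker hfτ (htight τ hτ), LinearMap.mem_ker, vsub_eq_sub, map_sub] at h1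
    rw [hiff, ← htight τ hτ q hqF]
    linarith
  obtain ⟨ε, hε, hε1, hgap⟩ := hK.exists_gap hKa τ
  let c : ι → ℝ := fun σ => if a.mulVec (q - p) σ = 1 then 1 + ε else 1
  have hcpos : ∀ σ, 0 < c σ := fun σ => by
    simp only [c]; split_ifs <;> linarith
  have hc1 : ∀ σ, 1 ≤ c σ := fun σ => by
    simp only [c]; split_ifs <;> linarith
  have hc2 : ∀ σ, c σ ≤ 2 := fun σ => by
    simp only [c]; split_ifs <;> linarith
  have hnot : ¬ IsLatticeFree d {x | ∀ σ, a.mulVec (x - p) σ ≤ c σ} := by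
    intro hfree
    have heq := hK.2 _ hfree fun x hx σ => (hle x hx σ).trans (hc1 σ)
    have hqint : q ∈ interior {x | ∀ σ, a.mulVec (x - p) σ ≤ c σ} := by
      rw [interior_setOf_mulVec_le a p hcpos]
      intro σ
      simp only [c]
      split_ifs with h
      · rw [h]; linarith
      · exact lt_of_le_of_ne (hle q (hFK hqF) σ) h
    rw [heq] at hqint
    exact hF.notMem_interior hdim hqF hqint
  obtain ⟨z, hzint, hz⟩ :
      (interior {x | ∀ σ, a.mulVec (x - p) σ ≤ c σ} ∩ intLattice d).Nonempty := by
    by_contra hcon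
    exact hnot ⟨isClosed_setOf_mulVec_le a p c, convex_setOf_mulVec_le a p c,
      Set.not_nonempty_iff_eq_empty.1 hcon⟩
  rw [interior_setOf_mulVec_le a p hcpos] at hzint
  have hcτ : c τ = 1 + ε := if_pos hτ
  have hzτ : a.mulVec (z - p) τ ≤ 1 :=
    hgap z hz (fun σ => (hzint σ).le.trans (hc2 σ)) (hcτ ▸ hzint τ)
  have hzother : ∀ σ, a.mulVec (q - p) σ ≠ 1 → a.mulVec (z - p) σ < 1 := fun σ hσ => by
    have := hzint σ
    simpa only [c, if_neg hσ] using this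
  have hzτ1 : a.mulVec (z - p) τ = 1 := by
    refine le_antisymm hzτ (not_lt.1 fun hlt => ?_)
    refine Set.eq_empty_iff_forall_notMem.1 hK.1.2.2 z ⟨?_, hz⟩
    rw [hint]
    intro σ
    by_cases hσ : a.mulVec (q - p) σ = 1
    · rw [hactive σ hσ]; exact hlt
    · exact hzother σ hσ
  refine ⟨z, mem_intrinsicInterior_iff_mem_nhdsWithin.2
    ⟨hF.mem_affineSpan hfτ (htight τ hτ) ((hiff τ z).1 hzτ1), ?_⟩, hz⟩
  have hnhds : {x | ∀ σ, a.mulVec (x - p) σ < c σ} ∈ nhds z := by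
    rw [← interior_setOf_mulVec_le a p hcpos]
    refine isOpen_interior.mem_nhds ?_
    rw [interior_setOf_mulVec_le a p hcpos]
    exact hzint
  filter_upwards [mem_nhdsWithin_of_mem_nhds hnhds, self_mem_nhdsWithin] with x hx hxA
  have hxτ := hspan x hxA
  refine hface x ?_ hxτ
  rw [hKa]
  intro σ
  by_cases hσ : a.mulVec (q - p) σ = 1
  · rw [hactive σ hσ, hxτ]
  · have := hx σ
    simp only [c, if_neg hσ] at this
    exact this.le

/-- A `d`-dimensional maximal lattice-free set in `ℝ^d` is a
polyhedron, and the relative interior of each of its facets contains an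
integer point. -/
theorem stmt_2 (d : ℕ) (K : Set (Fin d → ℝ))
    (hK : IsMaxLatticeFree d K) (hdim : affineSpan ℝ K = ⊤) :
    IsPolyhedron d K ∧
      ∀ F : Set (Fin d → ℝ), IsFacet d K F →
        (intrinsicInterior ℝ F ∩ intLattice d).Nonempty := by
  obtain ⟨p, hp⟩ := hK.1.2.1.interior_nonempty_iff_affineSpan_eq_top.2 hdim
  obtain ⟨a, ha⟩ := hK.exists_eq_setOf_mulVec_le hp
  refine ⟨?_, fun F hF => hK.intrinsicInterior_facet_inter_nonempty hdim ha hF⟩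
  rw [ha]
  exact isPolyhedron_setOf_mulVec_le a p _
end

section
/- Let K be a d-dimensional lattice-free polyhedron in ℝ^d such that the relative interior of every facet of K contains at least one point of ℤ^d. Then K is a maximal lattice-free set. -/
open Pointwise

section Polyhedron

variable {E ι : Type*} [NormedAddCommGroup E] [NormedSpace ℝ E]

/-- A point in the interior of `K` can be moved a little in any direction without leaving `K`. -/
theorem exists_pos_add_smul_mem_of_mem_interior {K : Set E} {p : E} (hp : p ∈ interior K) (v : E) :
    ∃ t : ℝ, 0 < t ∧ p + t • v ∈ K := by
  have hc : ContinuousAt (fun t : ℝ => p + t • v) 0 := by fun_prop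
  have h : ∀ᶠ t : ℝ in nhds 0, p + t • v ∈ K :=
    hc.eventually (by simpa using mem_interior_iff_mem_nhds.mp hp)
  obtain ⟨t, ht, ht0⟩ :=
    ((h.filter_mono nhdsWithin_le_nhds).and (self_mem_nhdsWithin (s := Set.Ioi (0 : ℝ)))).exists
  exact ⟨t, ht0, ht⟩

/-- A point in the relative interior of `F` can be moved a little away from any point of the affine
span of `F` without leaving `F`. -/
theorem exists_pos_add_smul_mem_of_mem_intrinsicInterior {F : Set E} {z q : E}
    (hz : z ∈ intrinsicInterior ℝ F) (hq : q ∈ affineSpan ℝ F) :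
    ∃ t : ℝ, 0 < t ∧ z + t • (z - q) ∈ F := by
  obtain ⟨z', hz', rfl⟩ := mem_intrinsicInterior.mp hz
  have hmem (t : ℝ) : (z' : E) + t • ((z' : E) - q) ∈ affineSpan ℝ F := by
    have := AffineSubspace.vadd_mem_of_mem_direction
      (Submodule.smul_mem _ t (AffineSubspace.vsub_mem_direction z'.2 hq)) z'.2
    simpa [add_comm] using this
  have hc : ContinuousAt
      (fun t : ℝ => (⟨(z' : E) + t • ((z' : E) - q), hmem t⟩ : affineSpan ℝ F)) 0 :=
    Continuous.continuousAt (by fun_prop)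
  have h : ∀ᶠ t : ℝ in nhds 0, (z' : E) + t • ((z' : E) - q) ∈ F :=
    hc.eventually_mem (s := Subtype.val ⁻¹' F) (by simpa using mem_interior_iff_mem_nhds.mp hz')
  obtain ⟨t, ht, ht0⟩ :=
    ((h.filter_mono nhdsWithin_le_nhds).and (self_mem_nhdsWithin (s := Set.Ioi (0 : ℝ)))).exists
  exact ⟨t, ht0, ht⟩

/-- A finite system of conditions has an irredundant subsystem with the same solutions. -/
theorem exists_irredundant_subsystem [Finite ι] {V : Type*} (P : ι → V → Prop) :
    ∃ S : Set ι, (∀ x, (∀ i ∈ S, P i x) ↔ ∀ i, P i x) ∧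
      ∀ i ∈ S, ∃ y, ¬ P i y ∧ ∀ j ∈ S, j ≠ i → P j y := by
  obtain ⟨S, hS⟩ := (Set.toFinite {S : Set ι | ∀ x, (∀ i ∈ S, P i x) ↔ ∀ i, P i x}).exists_minimal
    ⟨Set.univ, by simp⟩
  refine ⟨S, hS.prop, fun i hi => ?_⟩
  by_contra! h
  refine hS.not_prop_of_lt (y := S \ {i}) ?_ fun x => ?_
  · exact Set.sdiff_singleton_ssubset.mpr hi
  · rw [← hS.prop x]
    refine ⟨fun hx => ?_, fun hx j hj => hx j hj.1⟩
    have hx' : ∀ j ∈ S, j ≠ i → P j x := fun j hj hji => hx j ⟨hj, hji⟩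
    intro j hj
    by_cases hji : j = i
    · subst hji
      by_contra hn
      obtain ⟨k, hk, hki, hkx⟩ := h x hn
      exact hkx (hx' k hk hki)
    · exact hx' j hj hji

/-- The face cut out by an irredundant inequality of a full-dimensional polyhedron spans the
hyperplane where that inequality is tight. -/
theorem mem_affineSpan_face_of_irredundant [Finite ι] {S : Set ι} {l : ι → E →L[ℝ] ℝ} {b : ι → ℝ}
    {p : E} (hp : ∀ i ∈ S, l i p < b i) {i : ι} (hi : i ∈ S) {y : E} (hiy : b i < l i y)
    (hy : ∀ j ∈ S, j ≠ i → l j y ≤ b j) {v : E} (hv : l i v = b i) :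
    v ∈ affineSpan ℝ {x | (∀ j ∈ S, l j x ≤ b j) ∧ l i x = b i} := by
  have hip := hp i hi
  have hD : 0 < l i y - l i p := by linarith
  set s : ℝ := (b i - l i p) / (l i y - l i p) with hs
  have hs1 : s < 1 := by rw [hs, div_lt_one hD]; linarith
  have hs0 : 0 < s := div_pos (by linarith) hD
  set w : E := p + s • (y - p) with hw
  have hwi : l i w = b i := by
    simp only [hw, map_add, map_smul, map_sub, smul_eq_mul, hs]
    field_simp
    ring
  have hwj : ∀ j ∈ S, j ≠ i → l j w < b j := by
    intro j hj hji
    have h1 := hp j hj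
    have h2 := hy j hj hji
    simp only [hw, map_add, map_smul, map_sub, smul_eq_mul]
    nlinarith
  have hU : w ∈ interior {x | ∀ j ∈ S, j ≠ i → l j x ≤ b j} := by
    rw [mem_interior_iff_mem_nhds]
    change ∀ᶠ x in nhds w, ∀ j ∈ S, j ≠ i → l j x ≤ b j
    refine Filter.eventually_all.mpr fun j => ?_
    by_cases hj : j ∈ S ∧ j ≠ i
    · filter_upwards [(l j).continuous.continuousAt.eventually_lt continuousAt_const
        (hwj j hj.1 hj.2)] with x hx _ _ using hx.le
    · exact Filter.Eventually.of_forall fun x h1 h2 => absurd ⟨h1, h2⟩ hj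
  obtain ⟨t, ht0, ht⟩ := exists_pos_add_smul_mem_of_mem_interior hU (v - w)
  have key (x : E) (hx : ∀ j ∈ S, j ≠ i → l j x ≤ b j) (hix : l i x = b i) :
      x ∈ affineSpan ℝ {x | (∀ j ∈ S, l j x ≤ b j) ∧ l i x = b i} :=
    subset_affineSpan ℝ _ ⟨fun j hj => by
      by_cases hji : j = i
      · subst hji; exact hix.le
      · exact hx j hj hji, hix⟩
  have h1 := key w (fun j hj hji => (hwj j hj hji).le) hwi
  have h2 := key _ ht (by simp [hwi, hv])
  have h3 := AffineMap.lineMap_mem t⁻¹ h1 h2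
  rw [AffineMap.lineMap_apply] at h3
  simpa [smul_smul, ht0.ne'] using h3

/-- The face of a set on which a valid linear inequality is tight is extreme. -/
theorem isExtreme_setOf_eq {K : Set E} {f : E →L[ℝ] ℝ} {c : ℝ} (h : ∀ x ∈ K, f x ≤ c) :
    IsExtreme ℝ K {x | x ∈ K ∧ f x = c} := by
  refine ⟨fun x hx => hx.1, ?_⟩
  rintro x hx y hy z ⟨-, hz⟩ ⟨s, t, hs, ht, hst, rfl⟩
  refine ⟨hx, le_antisymm (h x hx) ?_⟩
  have h2 := h y hy
  simp only [map_add, map_smul, smul_eq_mul] at hz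
  obtain rfl : s = 1 - t := by linarith
  nlinarith

/-- Let `K'` be a convex set containing `F`, where the affine span of `F` contains the hyperplane
`f = c`. If `K'` has a point with `c < f` and an interior point with `f < c`, then the relative
interior of `F` lies in the interior of `K'`. -/
theorem mem_interior_of_mem_intrinsicInterior {K' F : Set E} (hK' : Convex ℝ K') (hF : F ⊆ K')
    {f : E →L[ℝ] ℝ} {c : ℝ} (hspan : ∀ v, f v = c → v ∈ affineSpan ℝ F) {p x z : E}
    (hp : p ∈ interior K') (hpc : f p < c) (hx : x ∈ K') (hxc : c < f x)
    (hz : z ∈ intrinsicInterior ℝ F) : z ∈ interior K' := by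
  have hD : 0 < f x - f p := by linarith
  obtain ⟨s, hs⟩ : ∃ s : ℝ, s = (c - f p) / (f x - f p) := ⟨_, rfl⟩
  have hs1 : s < 1 := by rw [hs, div_lt_one hD]; linarith
  have hs0 : 0 < s := hs ▸ div_pos (by linarith) hD
  have hq : (1 - s) • p + s • x ∈ interior K' :=
    hK'.combo_interior_self_mem_interior hp hx (by linarith) hs0.le (by ring)
  have hfq : f ((1 - s) • p + s • x) = c := by
    simp only [map_add, map_smul, smul_eq_mul, hs]
    field_simp
    ring
  obtain ⟨t, ht0, ht⟩ := exists_pos_add_smul_mem_of_mem_intrinsicInterior hz (hspan _ hfq)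
  generalize (1 - s) • p + s • x = q at hq ht
  have := hK'.combo_interior_self_mem_interior (a := t / (1 + t)) (b := 1 / (1 + t))
    hq (hF ht) (by positivity) (by positivity) (by field_simp; ring)
  convert this using 1
  match_scalars
  · field_simp
  · field_simp
    ring

end Polyhedron

/-- The affine span of a nonempty set that spans a hyperplane has codimension one. -/
theorem finrank_direction_affineSpan_of_hyperplane {d : ℕ} {F : Set (Fin d → ℝ)}
    {f : (Fin d → ℝ) →L[ℝ] ℝ} (hf : f ≠ 0) {c : ℝ} (hF : ∀ x ∈ F, f x = c)
    (hne : F.Nonempty) (hspan : ∀ v, f v = c → v ∈ affineSpan ℝ F) :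
    Module.finrank ℝ (affineSpan ℝ F).direction + 1 = d := by
  have hdir : (affineSpan ℝ F).direction = LinearMap.ker (f : (Fin d → ℝ) →ₗ[ℝ] ℝ) := by
    apply le_antisymm
    · rw [direction_affineSpan, vectorSpan_def, Submodule.span_le]
      rintro _ ⟨x, hx, y, hy, rfl⟩
      simp [hF x hx, hF y hy]
    · intro v hv
      obtain ⟨w, hw⟩ := hne
      have h1 : w + v ∈ affineSpan ℝ F := hspan _ (by
        have : f v = 0 := hv
        rw [map_add, hF w hw, this, add_zero])
      simpa using AffineSubspace.vsub_mem_direction h1 (subset_affineSpan ℝ F hw)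
  have := Module.Dual.finrank_ker_add_one_of_ne_zero
    (f := (f : (Fin d → ℝ) →ₗ[ℝ] ℝ)) (fun h => hf (by ext1 x; exact DFunLike.congr_fun h x))
  rw [hdir, this, Module.finrank_fin_fun]

/-- A `d`-dimensional lattice-free polyhedron in `ℝ^d` whose every
facet has an integer point in its relative interior is a maximal lattice-free set. -/
theorem stmt_3 (d : ℕ) (K : Set (Fin d → ℝ))
    (hK : IsLatticeFree d K) (hpoly : IsPolyhedron d K) (hdim : affineSpan ℝ K = ⊤)
    (hfacets : ∀ F : Set (Fin d → ℝ), IsFacet d K F →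
      (intrinsicInterior ℝ F ∩ intLattice d).Nonempty) :
    IsMaxLatticeFree d K := by
  refine ⟨hK, fun K' hK' hsub => Set.Subset.antisymm (fun x hx => ?_) hsub⟩
  obtain ⟨n, a, b, hKab⟩ := hpoly
  obtain ⟨l, hl⟩ : ∃ l : Fin n → (Fin d → ℝ) →L[ℝ] ℝ, ∀ i x, l i x = ∑ j, a i j * x j :=
    ⟨fun i => ∑ j, a i j • ContinuousLinearMap.proj j, fun i x => by simp⟩
  obtain ⟨S, hS, hirr⟩ := exists_irredundant_subsystem fun i x => l i x ≤ b i
  have hKS : K = {x | ∀ i ∈ S, l i x ≤ b i} := by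
    ext x
    simp only [hKab, Set.mem_ofPred_eq, hS, ← hl]
  obtain ⟨p, hp⟩ := hK.2.1.interior_nonempty_iff_affineSpan_eq_top.mpr hdim
  have hpS : ∀ i ∈ S, l i p < b i := by
    intro i hi
    obtain ⟨y, hy, -⟩ := hirr i hi
    obtain ⟨t, ht0, ht⟩ := exists_pos_add_smul_mem_of_mem_interior hp (y - p)
    have hpK := interior_subset hp
    rw [hKS] at ht hpK
    have h := ht i hi
    have hpi := hpK i hi
    rw [not_le] at hy
    simp only [map_add, map_smul, map_sub, smul_eq_mul] at h
    by_contra! hlt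
    nlinarith [mul_pos ht0 (show 0 < l i y - l i p by linarith)]
  by_contra hxK
  obtain ⟨i, hi, hix⟩ : ∃ i ∈ S, b i < l i x := by
    rw [hKS] at hxK
    simpa using hxK
  obtain ⟨y, hiy, hy⟩ := hirr i hi
  have hF : {x | x ∈ K ∧ l i x = b i} = {x | (∀ j ∈ S, l j x ≤ b j) ∧ l i x = b i} := by
    rw [hKS]; rfl
  have hspan : ∀ v, l i v = b i → v ∈ affineSpan ℝ {x | x ∈ K ∧ l i x = b i} := fun v hv => by
    rw [hF]
    exact mem_affineSpan_face_of_irredundant hpS hi (not_le.mp hiy) hy hv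
  have hli : l i ≠ 0 := fun h => by
    have h1 := hpS i hi
    rw [h] at h1 hix
    exact lt_asymm h1 hix
  have hne : {x | x ∈ K ∧ l i x = b i}.Nonempty := by
    obtain ⟨v, hv⟩ := LinearMap.surjective (f := (l i : (Fin d → ℝ) →ₗ[ℝ] ℝ))
      (fun h => hli (by ext1 x; exact DFunLike.congr_fun h x)) (b i)
    exact (affineSpan_nonempty ℝ).mp ⟨v, hspan v hv⟩
  have hfacet : IsFacet d K {x | x ∈ K ∧ l i x = b i} :=
    ⟨hne, isExtreme_setOf_eq fun x hx => (hKS ▸ hx : x ∈ {x | ∀ i ∈ S, l i x ≤ b i}) i hi,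
      hK.2.1.inter (convex_hyperplane (l i).isLinear _),
      finrank_direction_affineSpan_of_hyperplane hli (fun x hx => hx.2) hne hspan⟩
  obtain ⟨z, hz, hzint⟩ := hfacets _ hfacet
  have hzK' := mem_interior_of_mem_intrinsicInterior hK'.2.1 (fun x hx => hsub hx.1) hspan
    (interior_mono hsub hp) (hpS i hi) hx hix hz
  exact Set.eq_empty_iff_forall_notMem.mp hK'.2.2 z ⟨hzK', hzint⟩
end

section
/- Let K ⊆ ℝ^d be a maximal lattice-free set of dimension less than d. Then K = a + L is a translate of a (d−1)-dimensional linear subspace L of ℝ^d satisfying L ≠ span(L ∩ ℤ^d). -/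
open Pointwise

/-- The interior of a preimage under a nonzero linear functional on `ℝ^d`. -/
theorem interior_preimage_dual {d : ℕ} {f : Module.Dual ℝ (Fin d → ℝ)} (hf : f ≠ 0)
    (s : Set ℝ) : interior (f ⁻¹' s) = f ⁻¹' interior s :=
  ((f.isOpenMap_of_finiteDimensional
    (LinearMap.surjective_of_ne_zero hf)).preimage_interior_eq_interior_preimage
      f.continuous_of_finiteDimensional s).symm

/-- A closed convex set of values of a nonzero functional pulls back to a lattice-free set if its
interior avoids the values at lattice points. -/
theorem isLatticeFree_preimage_dual {d : ℕ} {f : Module.Dual ℝ (Fin d → ℝ)} (hf : f ≠ 0)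
    {s : Set ℝ} (hs : IsClosed s) (hc : Convex ℝ s)
    (h : ∀ z ∈ intLattice d, f z ∉ interior s) : IsLatticeFree d (f ⁻¹' s) := by
  refine ⟨hs.preimage f.continuous_of_finiteDimensional, hc.linear_preimage f, ?_⟩
  rw [interior_preimage_dual hf]
  ext z
  simp only [Set.mem_inter_iff, Set.mem_preimage, Set.mem_empty_iff_false, iff_false, not_and]
  exact fun hz hl => h z hl hz

/-- A proper subspace spanned by lattice vectors is annihilated by a nonzero functional taking
integer values on the lattice. -/
theorem exists_integral_dual_of_span_eq {d : ℕ} {L : Submodule ℝ (Fin d → ℝ)} (hL : L ≠ ⊤)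
    (hspan : Submodule.span ℝ ((L : Set (Fin d → ℝ)) ∩ intLattice d) = L) :
    ∃ f : Module.Dual ℝ (Fin d → ℝ), f ≠ 0 ∧ L ≤ LinearMap.ker f ∧
      ∀ z ∈ intLattice d, ∃ m : ℤ, f z = m := by
  let W : Submodule ℚ (Fin d → ℚ) :=
    (L.restrictScalars ℚ).comap ((Algebra.linearMap ℚ ℝ).compLeft (Fin d))
  have hW : W < ⊤ := by
    refine lt_top_iff_ne_top.2 fun h => hL ?_
    rw [eq_top_iff, ← (Pi.basisFun ℝ (Fin d)).span_eq, Submodule.span_le]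
    rintro _ ⟨i, rfl⟩
    have hi : (Pi.single i 1 : Fin d → ℚ) ∈ W := h ▸ Submodule.mem_top
    have he : (Algebra.linearMap ℚ ℝ).compLeft (Fin d) (Pi.single i 1) =
        Pi.basisFun ℝ (Fin d) i := by
      ext j
      by_cases hj : j = i
      · subst hj; simp
      · simp [hj]
    rw [← he]
    exact hi
  obtain ⟨g, hg, hWg⟩ := Submodule.exists_le_ker_of_lt_top W hW
  obtain ⟨b, hb⟩ := IsLocalization.exist_integer_multiples_of_finite (nonZeroDivisors ℤ)
    (fun i : Fin d => g (Pi.single i 1))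
  choose n hn using hb
  have hb0 : ((b : ℤ) : ℚ) ≠ 0 := by
    exact_mod_cast nonZeroDivisors.ne_zero b.2
  have hn' : ∀ i, (n i : ℚ) = (b : ℤ) * g (Pi.single i 1) := fun i => by
    simpa [Algebra.smul_def] using hn i
  have hsum : ∀ x : Fin d → ℚ, ∑ i, (n i : ℚ) * x i = (b : ℤ) * g x := fun x => by
    conv_rhs => rw [LinearMap.pi_apply_eq_sum_univ g x, Finset.mul_sum]
    refine Finset.sum_congr rfl fun i _ => ?_
    have he : (fun j => if i = j then (1 : ℚ) else 0) = Pi.single i 1 := by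
      ext j
      simp [Pi.single_apply, eq_comm]
    rw [hn', he, smul_eq_mul]
    ring
  let f : Module.Dual ℝ (Fin d → ℝ) := ∑ i, (n i : ℝ) • LinearMap.proj i
  have hf : ∀ x, f x = ∑ i, (n i : ℝ) * x i := fun x => by simp [f]
  refine ⟨f, fun h0 => hg ?_, ?_, ?_⟩
  · ext i
    have h1 : (n i : ℝ) = 0 := by
      have := hf (Pi.single i 1)
      simpa [h0, Pi.single_apply] using this.symm
    have h2 := hn' i
    rw [show n i = 0 by exact_mod_cast h1] at h2
    simpa [hb0] using h2.symm
  · rw [← hspan, Submodule.span_le]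
    rintro _ ⟨hz, z, rfl⟩
    have hzW : (fun i => (z i : ℚ)) ∈ W := by
      change (Algebra.linearMap ℚ ℝ).compLeft (Fin d) _ ∈ L
      have he : (Algebra.linearMap ℚ ℝ).compLeft (Fin d) (fun i => (z i : ℚ)) =
          fun i => (z i : ℝ) := by
        ext i
        simp
      rw [he]
      exact hz
    have h := hsum fun i => (z i : ℚ)
    rw [show g _ = 0 from hWg hzW, mul_zero] at h
    change f (fun i => (z i : ℝ)) = 0
    rw [hf]
    exact_mod_cast h
  · rintro _ ⟨z, rfl⟩
    exact ⟨∑ i, n i * z i, by rw [hf]; push_cast; rfl⟩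

/-- A maximal lattice-free set of dimension less than `d` is a
translate `a + L` of a `(d-1)`-dimensional linear subspace `L` with
`L ≠ span(L ∩ ℤ^d)`. -/
theorem stmt_4 (d : ℕ) (K : Set (Fin d → ℝ))
    (hK : IsMaxLatticeFree d K)
    (hdim : Module.finrank ℝ (affineSpan ℝ K).direction < d) :
    ∃ (a : Fin d → ℝ) (L : Submodule ℝ (Fin d → ℝ)),
      Module.finrank ℝ L = d - 1 ∧
      K = (fun x => a + x) '' (L : Set (Fin d → ℝ)) ∧
      (L : Set (Fin d → ℝ)) ≠
        (Submodule.span ℝ ((L : Set (Fin d → ℝ)) ∩ intLattice d) :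
          Set (Fin d → ℝ)) := by
  have hlt : (affineSpan ℝ K).direction < ⊤ := by
    refine lt_top_iff_ne_top.2 fun h => ?_
    rw [h, finrank_top, Module.finrank_fin_fun] at hdim
    exact lt_irrefl _ hdim
  obtain ⟨g, hg, hKg⟩ := Submodule.exists_le_ker_of_lt_top _ hlt
  obtain ⟨a, ha⟩ : ∃ a, K ⊆ g ⁻¹' {g a} := by
    rcases K.eq_empty_or_nonempty with rfl | ⟨a, haK⟩
    · exact ⟨0, Set.empty_subset _⟩
    · refine ⟨a, fun x hx => ?_⟩
      have h := hKg (AffineSubspace.vsub_mem_direction (subset_affineSpan ℝ K hx)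
        (subset_affineSpan ℝ K haK))
      simpa [sub_eq_zero] using h
  have hKeq : g ⁻¹' {g a} = K := hK.2 _ (isLatticeFree_preimage_dual hg isClosed_singleton
    (convex_singleton _) (by simp)) ha
  refine ⟨a, LinearMap.ker g, ?_, ?_, fun hspan => ?_⟩
  · have h := Module.Dual.finrank_ker_add_one_of_ne_zero hg
    rw [Module.finrank_fin_fun] at h
    omega
  · rw [← hKeq]
    ext x
    simp [Set.image_add_left, neg_add_eq_sub, sub_eq_zero]
  · obtain ⟨f, hf, hLf, hint⟩ := exists_integral_dual_of_span_eq
      (fun h => hg (LinearMap.ker_eq_top.1 h)) (SetLike.coe_injective hspan.symm)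
    have hfK : ∀ x ∈ K, f x = f a := fun x hx => by
      rw [← hKeq] at hx
      have hxa : x - a ∈ LinearMap.ker g := by simpa [sub_eq_zero] using hx
      simpa [sub_eq_zero] using hLf hxa
    have hstrip := hK.2 (f ⁻¹' Set.Icc (⌊f a⌋ : ℝ) (⌊f a⌋ + 1))
      (isLatticeFree_preimage_dual hf isClosed_Icc (convex_Icc _ _) fun z hz hm => by
        obtain ⟨m, hfm⟩ := hint z hz
        rw [interior_Icc, hfm] at hm
        have h1 : ⌊f a⌋ < m := by exact_mod_cast hm.1
        have h2 : m < ⌊f a⌋ + 1 := by exact_mod_cast hm.2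
        omega)
      fun x hx => by
        rw [Set.mem_preimage, hfK x hx]
        exact ⟨Int.floor_le _, (Int.lt_floor_add_one _).le⟩
    obtain ⟨y, hy⟩ := LinearMap.surjective_of_ne_zero hf ((⌊f a⌋ : ℝ) + 1)
    have hyK : y ∈ K := by
      rw [← hstrip, Set.mem_preimage, hy]
      exact ⟨by linarith, le_rfl⟩
    have h := Int.lt_floor_add_one (f a)
    rw [← hy, hfK y hyK] at h
    exact lt_irrefl _ h
end

section
/- Let L be a (d−1)-dimensional linear subspace of ℝ^d with L ≠ span(L ∩ ℤ^d), and let a ∈ ℝ^d. Then the translate K = a + L is a maximal lattice-free set in ℝ^d. -/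
open Pointwise

/-- If a linear functional `f ≠ 0` takes values in a cyclic group on the standard basis, then its
kernel is spanned by integer vectors. -/
theorem ker_le_span_of_basis_zsmul {d : ℕ} {f : (Fin d → ℝ) →ₗ[ℝ] ℝ} (hf : f ≠ 0) {g : ℝ}
    {n : Fin d → ℤ} (hn : ∀ i, f (Pi.single i 1) = n i * g) :
    LinearMap.ker f ≤
      Submodule.span ℝ ((LinearMap.ker f : Set (Fin d → ℝ)) ∩ intLattice d) := by
  have hfx : ∀ x, f x = (∑ i, x i * n i) * g := by
    intro x
    rw [LinearMap.pi_apply_eq_sum_univ f x, Finset.sum_mul]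
    refine Finset.sum_congr rfl fun i _ => ?_
    have : (fun j => if i = j then (1 : ℝ) else 0) = Pi.single i 1 := by
      ext j
      simp [Pi.single_apply, eq_comm]
    rw [this, hn, smul_eq_mul, mul_assoc]
  have hg : g ≠ 0 := by
    rintro rfl
    exact hf (LinearMap.ext fun x => by simp [hfx])
  obtain ⟨k, hk⟩ : ∃ k, n k ≠ 0 := by
    by_contra! h
    exact hf (LinearMap.ext fun x => by simp [hfx, h])
  have hk' : (n k : ℝ) ≠ 0 := by exact_mod_cast hk
  intro x hx
  have hx0 : ∑ i, x i * n i = 0 := by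
    rw [LinearMap.mem_ker, hfx] at hx
    exact (mul_eq_zero.mp hx).resolve_right hg
  have hdecomp : x = (n k : ℝ)⁻¹ • ∑ i, x i •
      ((n k : ℝ) • Pi.single i (1 : ℝ) - (n i : ℝ) • Pi.single k (1 : ℝ) : Fin d → ℝ) := by
    rw [eq_inv_smul_iff₀ hk']
    ext j
    simp only [Finset.sum_apply, Pi.smul_apply, Pi.sub_apply, smul_eq_mul, mul_sub,
      Finset.sum_sub_distrib, ← mul_assoc, ← Finset.sum_mul, hx0]
    simp [Pi.single_apply, mul_comm]
  rw [hdecomp]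
  refine Submodule.smul_mem _ _ (Submodule.sum_mem _ fun i _ => Submodule.smul_mem _ _
    (Submodule.subset_span ⟨?_, n k • Pi.single i 1 - n i • Pi.single k 1, ?_⟩))
  · simp only [SetLike.mem_coe, LinearMap.mem_ker, map_sub, map_smul, hn, smul_eq_mul]
    ring
  · ext j
    simp [Pi.single_apply]

/-- A nonzero linear functional whose kernel is not spanned by integer vectors maps `ℤ^d` to a
dense set of reals. -/
theorem dense_image_intLattice {d : ℕ} {f : (Fin d → ℝ) →ₗ[ℝ] ℝ} (hf : f ≠ 0)
    (hne : (LinearMap.ker f : Set (Fin d → ℝ)) ≠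
      Submodule.span ℝ ((LinearMap.ker f : Set (Fin d → ℝ)) ∩ intLattice d)) :
    Dense (f '' intLattice d) := by
  let φ : (Fin d → ℤ) →+ ℝ :=
    f.toAddMonoidHom.comp ((Int.castAddHom ℝ).compLeft (Fin d))
  have hφ : (φ.range : Set ℝ) = f '' intLattice d := by
    rw [intLattice, ← Set.range_comp]
    rfl
  rw [← hφ]
  refine φ.range.dense_or_cyclic.resolve_right ?_
  rintro ⟨g, hg⟩
  have hmem : ∀ i, ∃ m : ℤ, f (Pi.single i 1) = m * g := by
    intro i
    have h : φ (Pi.single i 1) ∈ φ.range := ⟨_, rfl⟩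
    rw [hg, AddSubgroup.mem_closure_singleton] at h
    obtain ⟨m, hm⟩ := h
    refine ⟨m, ?_⟩
    rw [← zsmul_eq_mul, hm]
    change f _ = f _
    congr 1
    ext j
    by_cases hij : j = i <;> simp [hij]
  choose n hn using hmem
  refine hne (congrArg _ (le_antisymm (ker_le_span_of_basis_zsmul hf hn) ?_))
  exact Submodule.span_le.mpr Set.inter_subset_left

/-- A convex set containing a hyperplane `f = c` and a point `x` contains every point at which `f`
lies strictly between `c` and `f x`. -/
theorem Convex.mem_of_mem_openSegment_of_hyperplane {E : Type*} [AddCommGroup E] [Module ℝ E]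
    {f : E →ₗ[ℝ] ℝ} {K : Set E} (hK : Convex ℝ K) {c : ℝ} (hc : ∀ p, f p = c → p ∈ K)
    {x y : E} (hx : x ∈ K) (hy : f y ∈ openSegment ℝ c (f x)) : y ∈ K := by
  obtain ⟨s, t, hs, ht, hst, h⟩ := hy
  have hp : s⁻¹ • (y - t • x) ∈ K := by
    apply hc
    rw [map_smul, map_sub, map_smul, ← h, add_sub_cancel_right, inv_smul_smul₀ hs.ne']
  have := hK hp hx hs.le ht.le hst
  rwa [smul_inv_smul₀ hs.ne', sub_add_cancel] at this

/-- A hyperplane in `ℝ^d` through the origin is the kernel of a nonzero linear functional. -/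
theorem exists_ne_zero_ker_eq {d : ℕ} (hd : d ≠ 0) (L : Submodule ℝ (Fin d → ℝ))
    (hL : Module.finrank ℝ L = d - 1) :
    ∃ f : (Fin d → ℝ) →ₗ[ℝ] ℝ, f ≠ 0 ∧ L = LinearMap.ker f := by
  have hlt : L < ⊤ := by
    rw [lt_top_iff_ne_top]
    rintro rfl
    rw [finrank_top, Module.finrank_fin_fun] at hL
    omega
  obtain ⟨f, hf, hle⟩ := L.exists_le_ker_of_lt_top hlt
  refine ⟨f, hf, Submodule.eq_of_le_of_finrank_eq hle ?_⟩
  have h1 := LinearMap.finrank_range_add_finrank_ker f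
  rw [LinearMap.range_eq_top.mpr (LinearMap.surjective hf), finrank_top, Module.finrank_self,
    Module.finrank_fin_fun] at h1
  omega

/-- If `L` is a `(d-1)`-dimensional linear subspace of `ℝ^d` with
`L ≠ span(L ∩ ℤ^d)` and `a ∈ ℝ^d`, then `a + L` is a maximal lattice-free set. -/
theorem stmt_5 (d : ℕ) (L : Submodule ℝ (Fin d → ℝ)) (a : Fin d → ℝ)
    (hL : Module.finrank ℝ L = d - 1)
    (hne : (L : Set (Fin d → ℝ)) ≠
      (Submodule.span ℝ ((L : Set (Fin d → ℝ)) ∩ intLattice d) :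
        Set (Fin d → ℝ))) :
    IsMaxLatticeFree d ((fun x => a + x) '' (L : Set (Fin d → ℝ))) := by
  have hd : d ≠ 0 := by
    rintro rfl
    exact hne (congrArg _ (Subsingleton.elim _ _))
  obtain ⟨f, hf, rfl⟩ := exists_ne_zero_ker_eq hd L hL
  have hsurj : Function.Surjective f := LinearMap.surjective hf
  have hcont : Continuous f := f.continuous_of_finiteDimensional
  have hK : (fun x => a + x) '' (LinearMap.ker f : Set (Fin d → ℝ)) = f ⁻¹' {f a} := by
    ext x
    simp [Set.image_add_left, neg_add_eq_zero, eq_comm (a := f x)]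
  rw [hK]
  refine ⟨⟨isClosed_singleton.preimage hcont, (convex_singleton _).linear_preimage f, ?_⟩, ?_⟩
  · rw [← (f.isOpenMap_of_finiteDimensional hsurj).preimage_interior_eq_interior_preimage hcont,
      interior_singleton, Set.preimage_empty, Set.empty_inter]
  · rintro K' ⟨-, hconv, hfree⟩ hsub
    refine Set.Subset.antisymm (fun x hx => ?_) hsub
    by_contra hxa
    have hne' : f a ≠ f x := fun h => hxa h.symm
    have hopen : IsOpen (openSegment ℝ (f a) (f x)) := by
      rw [openSegment_eq_Ioo' hne']
      exact isOpen_Ioo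
    obtain ⟨_, hz, z, hzl, rfl⟩ := (dense_image_intLattice hf hne).inter_open_nonempty _ hopen
      ⟨_, midpoint_mem_openSegment ..⟩
    have hint : z ∈ interior K' := interior_maximal
      (fun y hy => hconv.mem_of_mem_openSegment_of_hyperplane hsub hx hy)
      (hopen.preimage hcont) hz
    exact Set.eq_empty_iff_forall_notMem.mp hfree z ⟨hint, hzl⟩
end

section
/- Let K ⊆ ℝ^d be a d-dimensional lattice-free set such that L := rec(K) is a linear subspace of ℝ^d, and let M be a linear subspace of ℝ^d with M ⊆ cl(ℤ^d + L), where cl denotes topological closure. Then K + M is lattice-free. -/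
open Pointwise

/-- A closed set in a finite-dimensional space whose asymptotic directions all lie in a
subspace `L` of translations preserving it has closed Minkowski sum with every subspace. -/
theorem IsClosed.add_submodule_of_asymptoticCone_subset {E : Type*} [NormedAddCommGroup E]
    [NormedSpace ℝ E] [FiniteDimensional ℝ E] {K : Set E} (hK : IsClosed K)
    {L : Submodule ℝ E} (hKL : asymptoticCone ℝ K ⊆ L) (hL : ∀ u ∈ L, ∀ x ∈ K, x + u ∈ K)
    (M : Submodule ℝ E) : IsClosed (K + (M : Set E)) := by
  obtain ⟨N, hLN⟩ := L.exists_isCompl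
  have hN : IsClosed (N : Set E) := N.closed_of_finiteDimensional
  have hbounded : Bornology.IsBounded (K ∩ N) := by
    rw [isBounded_iff_asymptoticCone_subset_singleton]
    intro v hv
    have hvN : v ∈ N := by
      have := asymptoticCone_mono Set.inter_subset_right hv
      rwa [asymptoticCone_submodule, hN.closure_eq] at this
    exact Submodule.disjoint_def.mp hLN.disjoint v
      (hKL (asymptoticCone_mono Set.inter_subset_left hv)) hvN
  have hcompact : IsCompact (K ∩ N) :=
    Metric.isCompact_of_isClosed_isBounded (hK.inter hN) hbounded
  have hsum : K + (M : Set E) = (K ∩ N) + ((L ⊔ M : Submodule ℝ E) : Set E) := by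
    ext y
    simp only [Set.mem_add, SetLike.mem_coe]
    constructor
    · rintro ⟨x, hx, m, hm, rfl⟩
      obtain ⟨l, hl, n, hn, rfl⟩ := Submodule.mem_sup.mp
        (hLN.sup_eq_top ▸ Submodule.mem_top : x ∈ L ⊔ N)
      refine ⟨n, ⟨?_, hn⟩, l + m, Submodule.add_mem_sup hl hm, by abel⟩
      simpa using hL (-l) (L.neg_mem hl) _ hx
    · rintro ⟨x, ⟨hx, -⟩, w, hw, rfl⟩
      obtain ⟨l, hl, m, hm, rfl⟩ := Submodule.mem_sup.mp hw
      exact ⟨x + l, hL l hl x hx, m, hm, by abel⟩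
  rw [hsum]
  exact (L ⊔ M).closed_of_finiteDimensional.add_left_of_isCompact hcompact

/-- The interior of the sum of a convex set with nonempty interior and any convex set is contained
in the sum of the interior and that set. -/
theorem Convex.interior_add_subset {E : Type*} [NormedAddCommGroup E] [NormedSpace ℝ E]
    {K M : Set E} (hK : Convex ℝ K) (hK' : (interior K).Nonempty) (hM : Convex ℝ M) :
    interior (K + M) ⊆ interior K + M := by
  rcases M.eq_empty_or_nonempty with rfl | hM'
  · simp
  have hopen : IsOpen (interior K + M) := isOpen_interior.add_right
  have hsub : K + M ⊆ closure (interior K + M) := by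
    rintro _ ⟨x, hx, m, hm, rfl⟩
    have hx' : x ∈ closure (interior K) := by
      rw [hK.closure_interior_eq_closure_of_nonempty_interior hK']
      exact subset_closure hx
    exact map_mem_closure (f := (· + m)) (by fun_prop) hx' fun y hy => Set.add_mem_add hy hm
  calc interior (K + M) ⊆ interior (closure (interior K + M)) := interior_mono hsub
    _ = interior (interior K + M) :=
      (hK.interior.add hM).interior_closure_eq_interior_of_nonempty_interior
        (by rw [hopen.interior_eq]; exact hK'.add hM')
    _ = interior K + M := hopen.interior_eq

/-- Translations preserving a set preserve its interior. -/
theorem add_mem_interior_of_forall_add_mem {E : Type*} [TopologicalSpace E] [AddGroup E]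
    [ContinuousAdd E] {K : Set E} {u x : E} (hu : ∀ y ∈ K, y + u ∈ K) (hx : x ∈ interior K) :
    x + u ∈ interior K := by
  have himage : (· + u) '' interior K ⊆ interior K :=
    interior_maximal (by rintro _ ⟨y, hy, rfl⟩; exact hu y (interior_subset hy))
      ((isOpenMap_add_right u) _ isOpen_interior)
  exact himage ⟨x, hx, rfl⟩

/-- If `K ⊆ ℝ^d` is `d`-dimensional and lattice-free with
`rec(K) = L` a linear subspace, and `M` is a linear subspace contained in
`cl(ℤ^d + L)`, then `K + M` is lattice-free. -/
theorem stmt_10 (d : ℕ) (K : Set (Fin d → ℝ)) (L M : Submodule ℝ (Fin d → ℝ))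
    (hK : IsLatticeFree d K) (hdim : affineSpan ℝ K = ⊤)
    (hL : recCone d K = (L : Set (Fin d → ℝ)))
    (hM : (M : Set (Fin d → ℝ)) ⊆
      closure (intLattice d + (L : Set (Fin d → ℝ)))) :
    IsLatticeFree d (K + (M : Set (Fin d → ℝ))) := by
  obtain ⟨hclosed, hconvex, hfree⟩ := hK
  have hLK : ∀ u ∈ L, ∀ x ∈ K, x + u ∈ K := fun u hu => by
    rw [← SetLike.mem_coe, ← hL] at hu
    exact hu
  have hasymp : asymptoticCone ℝ K ⊆ L := by
    intro v hv
    rw [← hL]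
    intro x hx
    simpa [add_comm] using
      hconvex.smul_vadd_mem_of_isClosed_of_mem_asymptoticCone hclosed zero_le_one hv hx
  have hint : (interior K).Nonempty := hconvex.interior_nonempty_iff_affineSpan_eq_top.mpr hdim
  refine ⟨hclosed.add_submodule_of_asymptoticCone_subset hasymp hLK M,
    hconvex.add M.convex, Set.eq_empty_iff_forall_notMem.mpr ?_⟩
  rintro _ ⟨hz, z, rfl⟩
  obtain ⟨x, hx, m, hm, hxm⟩ := hconvex.interior_add_subset hint M.convex hz
  simp only at hxm
  set zr : Fin d → ℝ := fun i => (z i : ℝ) with hzr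
  have hopen : IsOpen ((zr + ·) ⁻¹' interior K) := isOpen_interior.preimage (by fun_prop)
  have hmem : -m ∈ (zr + ·) ⁻¹' interior K := by
    simpa [← hxm] using hx
  obtain ⟨_, hy, _, ⟨w, rfl⟩, l, hl, rfl⟩ := mem_closure_iff.mp (hM (M.neg_mem hm)) _ hopen hmem
  have hlattice := add_mem_interior_of_forall_add_mem (hLK (-l) (L.neg_mem hl)) hy
  refine Set.eq_empty_iff_forall_notMem.mp hfree _ ⟨hlattice, z + w, ?_⟩
  ext i
  simp [hzr, add_assoc]
end

section
/- Let K ⊆ ℝ^d be a d-dimensional lattice-free set such that L := rec(K) is a linear subspace of ℝ^d. Then the interior of K is disjoint from cl(ℤ^d + L), the topological closure of the set ℤ^d + L. -/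
open Pointwise

/-- If `K ⊆ ℝ^d` is `d`-dimensional and lattice-free with
`rec(K) = L` a linear subspace, then `interior K` is disjoint from
`cl(ℤ^d + L)`. -/
theorem stmt_11 (d : ℕ) (K : Set (Fin d → ℝ)) (L : Submodule ℝ (Fin d → ℝ))
    (hK : IsLatticeFree d K) (hdim : affineSpan ℝ K = ⊤)
    (hL : recCone d K = (L : Set (Fin d → ℝ))) :
    interior K ∩ closure (intLattice d + (L : Set (Fin d → ℝ))) = ∅ := by
  obtain ⟨-, -, hfree⟩ := hK
  refine Set.disjoint_iff_inter_eq_empty.1 (Disjoint.closure_right ?_ isOpen_interior)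
  rw [Set.disjoint_left]
  rintro _ hx ⟨z, hz, l, hl, rfl⟩
  have hneg : -l ∈ recCone d K := hL ▸ L.neg_mem hl
  have hsub : (· + l) ⁻¹' interior K ⊆ K := fun y hy => by
    simpa using hneg _ (interior_subset hy)
  have hz' : z ∈ interior K :=
    interior_maximal hsub (isOpen_interior.preimage (continuous_add_const l)) hx
  exact hfree.subset ⟨hz', hz⟩
end

section
/- Let L ⊆ ℝ^d be a linear subspace such that L ≠ span(ℤ^d ∩ L). Then there exists a line l through the origin (i.e., a one-dimensional linear subspace l = ℝ·a for some nonzero a ∈ ℝ^d) satisfying l ⊆ cl(ℤ^d + L) and l ⊄ L, where cl denotes topological closure. -/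
open Pointwise

open Filter Topology in
/-- A subgroup with arbitrarily short nonzero vectors contains a full line in its closure. -/
theorem AddSubgroup.exists_line_subset_closure {E : Type*} [NormedAddCommGroup E]
    [NormedSpace ℝ E] [FiniteDimensional ℝ E] (H : AddSubgroup E)
    (hH : ∀ ε > 0, ∃ e ∈ H, e ≠ 0 ∧ ‖e‖ < ε) :
    ∃ u : E, u ≠ 0 ∧ ∀ t : ℝ, t • u ∈ _root_.closure (H : Set E) := by
  have : ProperSpace E := FiniteDimensional.proper ℝ E
  choose e heH he0 hlt using fun n : ℕ => hH (1 / ((n : ℝ) + 1)) Nat.one_div_pos_of_nat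
  have he : Tendsto (fun n => ‖e n‖) atTop (𝓝 0) :=
    squeeze_zero (fun _ => norm_nonneg _) (fun n => (hlt n).le)
      tendsto_one_div_add_atTop_nhds_zero_nat
  obtain ⟨u, hu, φ, hφ, hlim⟩ := (isCompact_sphere (0 : E) 1).tendsto_subseq
    (x := fun n => ‖e n‖⁻¹ • e n) (fun n => by
      simp [norm_smul, inv_mul_cancel₀ (norm_ne_zero_iff.2 (he0 n))])
  refine ⟨u, ne_zero_of_mem_unit_sphere ⟨u, hu⟩, fun t => ?_⟩
  have hfloor : Tendsto (fun n => ((⌊t / ‖e n‖⌋ : ℤ) : ℝ) * ‖e n‖) atTop (𝓝 t) := by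
    have hbound : ∀ n, |((⌊t / ‖e n‖⌋ : ℤ) : ℝ) * ‖e n‖ - t| ≤ ‖e n‖ := fun n => by
      have hpos : 0 < ‖e n‖ := norm_pos_iff.2 (he0 n)
      have h1 := Int.floor_le (t / ‖e n‖)
      have h2 := Int.lt_floor_add_one (t / ‖e n‖)
      rw [le_div_iff₀ hpos] at h1
      rw [div_lt_iff₀ hpos] at h2
      rw [abs_le]
      constructor <;> linarith
    rw [tendsto_iff_dist_tendsto_zero]
    exact squeeze_zero (fun _ => dist_nonneg) (fun n => by simpa [Real.dist_eq] using hbound n) he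
  refine mem_closure_of_tendsto ((hfloor.comp hφ.tendsto_atTop).smul hlim)
    (Eventually.of_forall fun n => ?_)
  have hne : ‖e (φ n)‖ ≠ 0 := norm_ne_zero_iff.2 (he0 _)
  simp only [Function.comp_apply, smul_smul, mul_assoc, mul_inv_cancel₀ hne, mul_one,
    Int.cast_smul_eq_zsmul]
  exact H.zsmul_mem (heH _) _

/-- Some positive multiple of a given point of `ℝ^d` is arbitrarily close to `ℤ^d`. -/
theorem exists_intLattice_norm_nsmul_sub_lt {d : ℕ} (x : Fin d → ℝ) {ε : ℝ} (hε : 0 < ε) :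
    ∃ k : ℕ, 1 ≤ k ∧ ∃ w ∈ intLattice d, ‖(k : ℝ) • x - w‖ < ε := by
  obtain ⟨a, -, φ, hφ, hlim⟩ :=
    (isCompact_Icc (a := (0 : Fin d → ℝ)) (b := 1)).tendsto_subseq
      (x := fun n : ℕ => fun i => Int.fract ((n : ℝ) * x i))
      (fun n => ⟨fun i => Int.fract_nonneg _, fun i => (Int.fract_lt_one _).le⟩)
  obtain ⟨N, hN⟩ := Metric.cauchySeq_iff'.1 hlim.cauchySeq ε hε
  have hlt : φ N < φ (N + 1) := hφ N.lt_succ_self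
  refine ⟨φ (N + 1) - φ N, by omega, _,
    ⟨fun i => ⌊(φ (N + 1) : ℝ) * x i⌋ - ⌊(φ N : ℝ) * x i⌋, rfl⟩, ?_⟩
  convert hN (N + 1) N.le_succ using 1
  rw [dist_eq_norm]
  congr 1
  ext i
  simp only [Pi.sub_apply, Pi.smul_apply, smul_eq_mul, Function.comp_apply, Int.fract,
    Nat.cast_sub hlt.le, Int.cast_sub]
  ring

/-- If `L` is not spanned by its lattice points, some lattice points outside `L` are
arbitrarily close to `L`. -/
theorem exists_intLattice_notMem_norm_sub_lt {d : ℕ} {L : Submodule ℝ (Fin d → ℝ)}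
    {x : Fin d → ℝ} (hx : x ∈ L)
    (hxS : x ∉ Submodule.span ℝ (intLattice d ∩ (L : Set (Fin d → ℝ)))) {ε : ℝ} (hε : 0 < ε) :
    ∃ w ∈ intLattice d, w ∉ L ∧ ∃ y ∈ L, ‖w - y‖ < ε := by
  set S := Submodule.span ℝ (intLattice d ∩ (L : Set (Fin d → ℝ)))
  obtain ⟨r, hr, hball⟩ :=
    Metric.isOpen_iff.1 S.closed_of_finiteDimensional.isOpen_compl x hxS
  obtain ⟨k, hk, w, hw, hlt⟩ := exists_intLattice_norm_nsmul_sub_lt x (lt_min hε hr)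
  refine ⟨w, hw, fun hwL => ?_, (k : ℝ) • x, L.smul_mem _ hx, ?_⟩
  · have hk1 : (1 : ℝ) ≤ k := by exact_mod_cast hk
    have hk0 : (0 : ℝ) < k := by linarith
    refine hball (a := (k : ℝ)⁻¹ • w) ?_ (S.smul_mem _ (Submodule.subset_span ⟨hw, hwL⟩))
    have hsub : x - (k : ℝ)⁻¹ • w = (k : ℝ)⁻¹ • ((k : ℝ) • x - w) := by
      rw [smul_sub, inv_smul_smul₀ hk0.ne']
    rw [mem_ball_iff_norm', hsub, norm_smul, norm_inv, Real.norm_natCast]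
    calc (k : ℝ)⁻¹ * ‖(k : ℝ) • x - w‖ ≤ 1 * ‖(k : ℝ) • x - w‖ := by
          gcongr
          exact inv_le_one_of_one_le₀ hk1
      _ < r := by
          rw [one_mul]
          exact hlt.trans_le (min_le_right _ _)
  · rw [norm_sub_rev]
    exact hlt.trans_le (min_le_left _ _)

/-- The sumset `ℤ^d + L` as an additive subgroup. -/
def intLatticeAdd (d : ℕ) (L : Submodule ℝ (Fin d → ℝ)) : AddSubgroup (Fin d → ℝ) :=
  ((Int.castAddHom ℝ).compLeft (Fin d)).range ⊔ L.toAddSubgroup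

theorem coe_intLatticeAdd (d : ℕ) (L : Submodule ℝ (Fin d → ℝ)) :
    (intLatticeAdd d L : Set (Fin d → ℝ)) = intLattice d + (L : Set (Fin d → ℝ)) := by
  rw [intLatticeAdd, AddSubgroup.add_normal]
  rfl

/-- If `L ⊆ ℝ^d` is a linear subspace with `L ≠ span(ℤ^d ∩ L)`,
then there is a line `l = ℝ·a` through the origin with `l ⊆ cl(ℤ^d + L)` and
`l ⊄ L`. -/
theorem stmt_12 (d : ℕ) (L : Submodule ℝ (Fin d → ℝ))
    (hL : (L : Set (Fin d → ℝ)) ≠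
      (Submodule.span ℝ (intLattice d ∩ (L : Set (Fin d → ℝ))) :
        Set (Fin d → ℝ))) :
    ∃ a : Fin d → ℝ, a ≠ 0 ∧
      (∀ t : ℝ, t • a ∈ closure (intLattice d + (L : Set (Fin d → ℝ)))) ∧
      a ∉ L := by
  obtain ⟨x, hx, hxS⟩ : ∃ x ∈ L,
      x ∉ Submodule.span ℝ (intLattice d ∩ (L : Set (Fin d → ℝ))) := by
    by_contra! h
    exact hL (Set.Subset.antisymm h (Submodule.span_le.2 Set.inter_subset_right))
  obtain ⟨f, hf⟩ := Submodule.ClosedComplemented.of_finiteDimensional L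
  let P : (Fin d → ℝ) →L[ℝ] (Fin d → ℝ) := ContinuousLinearMap.id ℝ _ - L.subtypeL ∘L f
  have hP : ∀ v, P v = v - f v := fun v => rfl
  have hPL : ∀ v ∈ L, P v = 0 := fun v hv => by
    rw [hP, hf ⟨v, hv⟩, sub_self]
  obtain ⟨u, hu0, hu⟩ := (intLatticeAdd d L ⊓ f.ker.toAddSubgroup).exists_line_subset_closure
    fun ε hε => by
      obtain ⟨w, hw, hwL, y, hy, hlt⟩ := exists_intLattice_notMem_norm_sub_lt hx hxS
        (div_pos hε (by positivity : 0 < ‖P‖ + 1))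
      refine ⟨P w, ⟨?_, ?_⟩, fun h => hwL ?_, ?_⟩
      · change P w ∈ (intLatticeAdd d L : Set (Fin d → ℝ))
        rw [coe_intLatticeAdd, hP, sub_eq_add_neg]
        exact Set.add_mem_add hw (L.neg_mem (f w).2)
      · change f (P w) = 0
        rw [hP, map_sub, hf, sub_self]
      · rw [hP, sub_eq_zero] at h
        exact h ▸ (f w).2
      · have hPw : P w = P (w - y) := by rw [map_sub, hPL y hy, sub_zero]
        rw [lt_div_iff₀ (by positivity)] at hlt
        calc ‖P w‖ ≤ ‖P‖ * ‖w - y‖ := hPw ▸ P.le_opNorm _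
          _ ≤ ‖w - y‖ * (‖P‖ + 1) := by nlinarith [norm_nonneg (w - y)]
          _ < ε := hlt
  refine ⟨u, hu0, fun t => ?_, fun huL => hu0 ?_⟩
  · rw [← coe_intLatticeAdd]
    exact closure_mono Set.inter_subset_left (hu t)
  · have hker : f u = 0 := by
      have hmem := closure_minimal (t := (f.ker : Set (Fin d → ℝ))) Set.inter_subset_right
        f.isClosed_ker (hu 1)
      rw [one_smul] at hmem
      exact hmem
    have hfu := hf ⟨u, huL⟩
    rw [hker] at hfu
    exact (congrArg Subtype.val hfu).symm
end

section
/- Let K be a bounded d-dimensional maximal lattice-free set in ℝ^d. Then K is a polytope, i.e., K is the convex hull of finitely many points (equivalently, a bounded intersection of finitely many closed halfspaces). -/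
open Pointwise

/-- Two extreme points of a polyhedron at which the same constraints are active coincide. -/
lemma eq_of_extreme_of_active_eq {E ι : Type*} [AddCommGroup E] [Module ℝ E] [Finite ι]
    (f : ι → E →ₗ[ℝ] ℝ) (b : ι → ℝ) {x y : E}
    (hx : x ∈ Set.extremePoints ℝ {x | ∀ i, f i x ≤ b i})
    (h : ∀ i, f i x = b i → f i y = b i) : x = y := by
  have hsmall : ∀ i, ∀ᶠ ε in nhdsWithin (0 : ℝ) (Set.Ioi 0),
      f i (x + ε • (x - y)) ≤ b i ∧ f i (x - ε • (x - y)) ≤ b i := by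
    intro i
    simp only [map_add, map_sub, map_smul, smul_eq_mul]
    rcases (hx.1 i).eq_or_lt with hi | hi
    · simp [hi, h i hi]
    · have plus : Filter.Tendsto (fun ε : ℝ => f i x + ε * (f i x - f i y))
          (nhdsWithin 0 (Set.Ioi 0)) (nhds (f i x)) :=
        ((by fun_prop : Continuous fun ε : ℝ => f i x + ε * (f i x - f i y)).tendsto' 0 _
          (by simp)).mono_left nhdsWithin_le_nhds
      have minus : Filter.Tendsto (fun ε : ℝ => f i x - ε * (f i x - f i y))
          (nhdsWithin 0 (Set.Ioi 0)) (nhds (f i x)) :=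
        ((by fun_prop : Continuous fun ε : ℝ => f i x - ε * (f i x - f i y)).tendsto' 0 _
          (by simp)).mono_left nhdsWithin_le_nhds
      filter_upwards [plus.eventually_lt_const hi, minus.eventually_lt_const hi]
        with ε h₁ h₂ using ⟨h₁.le, h₂.le⟩
  obtain ⟨ε, hε, hpos⟩ :=
    ((Filter.eventually_all.2 hsmall).and self_mem_nhdsWithin).exists
  have hmid : x ∈ openSegment ℝ (x + ε • (x - y)) (x - ε • (x - y)) :=
    ⟨1 / 2, 1 / 2, by norm_num, by norm_num, by norm_num, by module⟩
  have heq : x + ε • (x - y) = x :=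
    hx.2 (fun i => (hε i).1) (fun i => (hε i).2) hmid
  have hzero : ε • (x - y) = 0 := by simpa using heq
  exact sub_eq_zero.1 ((smul_eq_zero.1 hzero).resolve_left (ne_of_gt hpos))

/-- A polyhedron has finitely many extreme points. -/
lemma finite_extremePoints_polyhedron {E ι : Type*} [AddCommGroup E] [Module ℝ E] [Finite ι]
    (f : ι → E →ₗ[ℝ] ℝ) (b : ι → ℝ) :
    (Set.extremePoints ℝ {x | ∀ i, f i x ≤ b i}).Finite := by
  refine Set.Finite.of_injOn (f := fun x => {i | f i x = b i}) (Set.mapsTo_univ _ _) ?_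
    Set.finite_univ
  intro x hx y _ hxy
  exact eq_of_extreme_of_active_eq f b hx fun i hi => (Set.ext_iff.1 hxy i).1 hi

/-- A compact polyhedron is a polytope. -/
lemma isPolytope_of_isCompact_polyhedron {d : ℕ} {ι : Type*} [Finite ι]
    (f : ι → (Fin d → ℝ) →ₗ[ℝ] ℝ) (b : ι → ℝ) {K : Set (Fin d → ℝ)}
    (hK : K = {x | ∀ i, f i x ≤ b i}) (hc : IsCompact K) (hconv : Convex ℝ K) :
    IsPolytope d K := by
  have hfin : (Set.extremePoints ℝ K).Finite := hK ▸ finite_extremePoints_polyhedron f b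
  refine ⟨hfin.toFinset, ?_⟩
  rw [hfin.coe_toFinset, ← hfin.isClosed_convexHull (𝕜 := ℝ) |>.closure_eq,
    closure_convexHull_extremePoints hc hconv]

/-- A point at which a nonzero linear functional is maximal on `P` is not interior to `P`. -/
lemma notMem_interior_of_forall_le {E : Type*} [AddCommGroup E] [Module ℝ E] [TopologicalSpace E]
    [ContinuousAdd E] [ContinuousSMul ℝ E] {P : Set E} {f : E →ₗ[ℝ] ℝ} (hf : f ≠ 0) {z : E}
    (h : ∀ x ∈ P, f x ≤ f z) : z ∉ interior P := by
  intro hz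
  obtain ⟨v, hv⟩ : ∃ v, 0 < f v := by
    obtain ⟨v, hv⟩ := DFunLike.ne_iff.1 hf
    rcases lt_or_gt_of_ne hv with hv | hv
    · exact ⟨-v, by simpa using hv⟩
    · exact ⟨v, hv⟩
  have htend : Filter.Tendsto (fun ε : ℝ => z + ε • v) (nhdsWithin 0 (Set.Ioi 0)) (nhds z) :=
    ((by fun_prop : Continuous fun ε : ℝ => z + ε • v).tendsto' 0 _
      (by simp)).mono_left nhdsWithin_le_nhds
  obtain ⟨ε, hε, hpos⟩ :=
    ((htend.eventually (mem_interior_iff_mem_nhds.1 hz)).and self_mem_nhdsWithin).exists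
  have hle := h _ hε
  simp only [map_add, map_smul, smul_eq_mul] at hle
  have := mul_pos (Set.mem_Ioi.1 hpos) hv
  linarith

/-- A bounded `d`-dimensional maximal lattice-free set in `ℝ^d`
is a polytope. -/
theorem stmt_14 (d : ℕ) (K : Set (Fin d → ℝ))
    (hK : IsMaxLatticeFree d K) (hdim : affineSpan ℝ K = ⊤)
    (hbd : Bornology.IsBounded K) :
    IsPolytope d K := by
  obtain ⟨⟨hclosed, hconv, hfree⟩, hmax⟩ := hK
  have hint : (interior K).Nonempty := hconv.interior_nonempty_iff_affineSpan_eq_top.2 hdim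
  obtain ⟨R, hR⟩ := hbd.exists_norm_le
  obtain ⟨N, hN⟩ := exists_nat_ge R
  have hsep : ∀ z : Fin d → ℤ, ∃ f : (Fin d → ℝ) →ₗ[ℝ] ℝ,
      f ≠ 0 ∧ ∀ x ∈ K, f x ≤ f fun i => (z i : ℝ) := by
    intro z
    have hz : (fun i => (z i : ℝ)) ∉ interior K := fun hz =>
      Set.eq_empty_iff_forall_notMem.1 hfree _ ⟨hz, z, rfl⟩
    obtain ⟨f, hf⟩ := geometric_hahn_banach_open_point hconv.interior isOpen_interior hz
    refine ⟨f.toLinearMap, ?_, fun x hx => ?_⟩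
    · intro h0
      obtain ⟨x, hx⟩ := hint
      have hzero : ∀ y, f y = 0 := fun y => LinearMap.congr_fun h0 y
      simpa [hzero] using hf x hx
    · have hx' : x ∈ closure (interior K) := by
        rw [hconv.closure_interior_eq_closure_of_nonempty_interior hint]
        exact subset_closure hx
      exact closure_minimal (fun y hy => (hf y hy).le)
        (isClosed_le f.continuous continuous_const) hx'
  choose g hg0 hgK using hsep
  let Z := Set.Icc (fun _ : Fin d => -(N : ℤ)) (fun _ => (N : ℤ))
  have : Finite Z := (Set.finite_Icc _ _).to_subtype
  let f : Fin d ⊕ Fin d ⊕ Z → (Fin d → ℝ) →ₗ[ℝ] ℝ :=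
    Sum.elim (fun i => LinearMap.proj i) (Sum.elim (fun i => -LinearMap.proj i) fun z => g z)
  let b : Fin d ⊕ Fin d ⊕ Z → ℝ :=
    Sum.elim (fun _ => N) (Sum.elim (fun _ => N) fun z => g z fun i => (z.1 i : ℝ))
  have hP : IsLatticeFree d {x | ∀ i, f i x ≤ b i} := by
    refine ⟨?_, ?_, ?_⟩
    · rw [Set.ofPred_forall]
      exact isClosed_iInter fun i =>
        isClosed_le (f i).continuous_of_finiteDimensional continuous_const
    · rw [Set.ofPred_forall]
      exact convex_iInter fun i => convex_halfSpace_le (f i).isLinear _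
    · rw [Set.eq_empty_iff_forall_notMem]
      rintro _ ⟨hx, z, rfl⟩
      have hz : z ∈ Z := by
        have hmem := interior_subset hx
        refine ⟨fun i => ?_, fun i => ?_⟩
        · have h : -(z i : ℝ) ≤ N := hmem (Sum.inr (Sum.inl i))
          have h' : -z i ≤ (N : ℤ) := by exact_mod_cast h
          exact neg_le.1 h'
        · have h : (z i : ℝ) ≤ N := hmem (Sum.inl i)
          exact_mod_cast h
      exact notMem_interior_of_forall_le (P := {x | ∀ i, f i x ≤ b i}) (hg0 z)
        (fun x hx => hx (Sum.inr (Sum.inr ⟨z, hz⟩))) hx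
  have hKP : K ⊆ {x | ∀ i, f i x ≤ b i} := by
    intro x hx
    have habs : ∀ i, |x i| ≤ N := fun i => (norm_le_pi_norm x i).trans ((hR x hx).trans hN)
    rintro (i | i | z)
    · exact (abs_le.1 (habs i)).2
    · exact neg_le.1 (abs_le.1 (habs i)).1
    · exact hgK z x hx
  exact isPolytope_of_isCompact_polyhedron f b (hmax _ hP hKP).symm
    (Metric.isCompact_of_isClosed_isBounded hclosed hbd) hconv
end
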